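/- arXiv:1805.04782 — 9 statements merged into one kernel-verified Lean document; each statement's English description precedes it below -/
import Mathlib

section
/- Let D ⊆ ℝ be open, let f : D → ℝ satisfy a local Lipschitz condition on D, let T > 0, and let y : [0,T] → D be differentiable with y'(t) = f(y(t)) for all t ∈ [0,T] and y(0) = y₀. Let K ⊆ D be compact with y([0,T]) contained in the interior of K, let h₀ > 0, and let Φ : [0,h₀] × K → ℝ be continuous such that: (Consistency) Φ(0,y) = y for all y ∈ K, the partial derivative ∂Φ/∂h exists and is continuous on [0,h₀] × K, and ∂Φ/∂h(0,y) = f(y) for all y ∈ K; (Lipschitz) there is L > 0 with |∂Φ/∂h(h,y) − ∂Φ/∂h(h,y')| ≤ L|y − y'| for all h ∈ [0,h₀] and y, y' ∈ K; (Local truncation error) there are p ≥ 1 and C ≥ 0 with |y(t+h) − Φ(h,y(t))| ≤ C h^{p+1} whenever t ∈ [0,T], 0 ≤ h ≤ h₀ and t + h ≤ T. Then there exists N₀ ∈ ℕ such that for every N ≥ N₀, setting h = T/N, the sequence defined by y₀⁽ᴺ⁾ = y₀ and y_{n+1}⁽ᴺ⁾ = Φ(h, y_n⁽ᴺ⁾)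 for n = 0,…,N−1 is well defined, each y_n⁽ᴺ⁾ lies in the interior of K, and max_{0 ≤ n ≤ N} |y(nh) − y_n⁽ᴺ⁾| ≤ M h^p with M = (C/L)(e^{LT} − 1). -/
/-!
Integrating the Lipschitz bound on `∂Φ/∂h` over a step of size `h` shows that the step expands
distances by at most `1 + L h`; its local error is at most `(C h ^ p) h`. The error recursion is
thus an explicit Euler step for `g' = L g + C h ^ p`, whose solution from `0` is a Grönwall bound;
that solution is convex, so the Euler iterates stay below it. The estimate is available only while
the iterates remain in `K`, but for small `h` it is smaller than the distance from the compact
trajectory to the complement of `interior K`, so the error bound and the confinement of the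
iterates propagate together.
-/

open Set

section GronwallBound

theorem gronwallBound_add (δ K ε x h : ℝ) :
    gronwallBound δ K ε (x + h) = gronwallBound (gronwallBound δ K ε x) K ε h := by
  rcases eq_or_ne K 0 with rfl | hK
  · simp only [gronwallBound_K0]
    ring
  · simp only [gronwallBound_of_K_ne_0 hK, mul_add, Real.exp_add]
    ring

theorem gronwallBound_zero_mul (K ε c x : ℝ) :
    gronwallBound 0 K (ε * c) x = gronwallBound 0 K ε x * c := by
  unfold gronwallBound
  split_ifs <;> ring

theorem gronwallBound_nonneg {δ K ε x : ℝ} (hδ : 0 ≤ δ) (hK : 0 ≤ K) (hε : 0 ≤ ε) (hx : 0 ≤ x) :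
    0 ≤ gronwallBound δ K ε x :=
  calc 0 ≤ δ := hδ
    _ = gronwallBound δ K ε 0 := (gronwallBound_x0 δ K ε).symm
    _ ≤ gronwallBound δ K ε x := gronwallBound_mono hδ hε hK hx

theorem one_add_mul_add_le_gronwallBound {δ K ε : ℝ} (hδ : 0 ≤ δ) (hK : 0 ≤ K) (hε : 0 ≤ ε)
    (h : ℝ) : (1 + K * h) * δ + ε * h ≤ gronwallBound δ K ε h := by
  rcases hK.eq_or_lt with rfl | hK
  · simp [gronwallBound_K0]
  · have hexp : K * h + 1 ≤ Real.exp (K * h) := Real.add_one_le_exp (K * h)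
    calc (1 + K * h) * δ + ε * h = δ * (K * h + 1) + ε / K * (K * h + 1 - 1) := by
          field_simp
          ring
      _ ≤ δ * Real.exp (K * h) + ε / K * (Real.exp (K * h) - 1) := by gcongr
      _ = gronwallBound δ K ε h := by rw [gronwallBound_of_K_ne_0 hK.ne']

theorem le_gronwallBound_of_succ_le {u : ℕ → ℝ} {δ K ε h : ℝ} {n : ℕ} (hδ : 0 ≤ δ) (hK : 0 ≤ K)
    (hε : 0 ≤ ε) (hh : 0 ≤ h) (h_zero : u 0 ≤ δ)
    (h_succ : ∀ m < n, u (m + 1) ≤ (1 + K * h) * u m + ε * h) :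
    u n ≤ gronwallBound δ K ε (n * h) := by
  induction n with
  | zero => simpa [gronwallBound_x0] using h_zero
  | succ n ih =>
    have h_nonneg : 0 ≤ gronwallBound δ K ε (n * h) :=
      gronwallBound_nonneg hδ hK hε (by positivity)
    calc u (n + 1) ≤ (1 + K * h) * u n + ε * h := h_succ n n.lt_succ_self
      _ ≤ (1 + K * h) * gronwallBound δ K ε (n * h) + ε * h := by
          gcongr
          exact ih fun m hm ↦ h_succ m (hm.trans n.lt_succ_self)
      _ ≤ gronwallBound (gronwallBound δ K ε (n * h)) K ε h :=
          one_add_mul_add_le_gronwallBound h_nonneg hK hε h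
      _ = gronwallBound δ K ε ((n + 1 : ℕ) * h) := by
          rw [← gronwallBound_add, Nat.cast_succ, add_one_mul]

end GronwallBound

section Shadowing

variable {X : Type*} [PseudoMetricSpace X] {ψ : X → X} {S : Set X} {w x : ℕ → X} {L h ε : ℝ}

theorem dist_le_gronwallBound_of_pseudoOrbit {n : ℕ} (hL : 0 ≤ L) (hh : 0 ≤ h) (hε : 0 ≤ ε)
    (hψ : ∀ a ∈ S, ∀ b ∈ S, dist (ψ a) (ψ b) ≤ (1 + L * h) * dist a b)
    (hwS : ∀ m < n, w m ∈ S) (hw : ∀ m < n, dist (w (m + 1)) (ψ (w m)) ≤ ε * h)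
    (hxS : ∀ m < n, x m ∈ S) (hx : ∀ m < n, x (m + 1) = ψ (x m)) :
    dist (w n) (x n) ≤ gronwallBound (dist (w 0) (x 0)) L ε (n * h) := by
  refine le_gronwallBound_of_succ_le (u := fun m ↦ dist (w m) (x m)) dist_nonneg hL hε hh le_rfl
    fun m hm ↦ ?_
  calc dist (w (m + 1)) (x (m + 1))
      ≤ dist (w (m + 1)) (ψ (w m)) + dist (ψ (w m)) (x (m + 1)) := dist_triangle _ _ _
    _ = dist (w (m + 1)) (ψ (w m)) + dist (ψ (w m)) (ψ (x m)) := by rw [hx m hm]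
    _ ≤ ε * h + (1 + L * h) * dist (w m) (x m) :=
        add_le_add (hw m hm) (hψ _ (hwS m hm) _ (hxS m hm))
    _ = (1 + L * h) * dist (w m) (x m) + ε * h := add_comm _ _

theorem dist_le_gronwallBound_of_ball_subset {N : ℕ} {r : ℝ} (hL : 0 ≤ L) (hh : 0 ≤ h)
    (hε : 0 ≤ ε) (hψ : ∀ a ∈ S, ∀ b ∈ S, dist (ψ a) (ψ b) ≤ (1 + L * h) * dist a b)
    (hw_ball : ∀ n ≤ N, Metric.ball (w n) r ⊆ S)
    (hw : ∀ n < N, dist (w (n + 1)) (ψ (w n)) ≤ ε * h) (hx : ∀ n < N, x (n + 1) = ψ (x n))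
    (hr : gronwallBound (dist (w 0) (x 0)) L ε (N * h) < r) :
    ∀ n ≤ N, dist (w n) (x n) ≤ gronwallBound (dist (w 0) (x 0)) L ε (N * h) := by
  have hr_pos : 0 < r := (gronwallBound_nonneg dist_nonneg hL hε (by positivity)).trans_lt hr
  intro n
  induction n using Nat.strong_induction_on with
  | h n ih =>
    intro hn
    have hxS : ∀ m < n, x m ∈ S := fun m hm ↦
      hw_ball m (hm.le.trans hn) (Metric.mem_ball'.2 ((ih m hm (hm.le.trans hn)).trans_lt hr))
    calc dist (w n) (x n) ≤ gronwallBound (dist (w 0) (x 0)) L ε (n * h) :=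
          dist_le_gronwallBound_of_pseudoOrbit hL hh hε hψ
            (fun m hm ↦ hw_ball m (hm.le.trans hn) (Metric.mem_ball_self hr_pos))
            (fun m hm ↦ hw m (hm.trans_le hn)) hxS (fun m hm ↦ hx m (hm.trans_le hn))
      _ ≤ gronwallBound (dist (w 0) (x 0)) L ε (N * h) :=
          gronwallBound_mono dist_nonneg hε hL (by gcongr)

theorem mem_and_dist_curve_le_gronwallBound_mul_rpow {y : ℝ → X} {T C p r : ℝ} {N : ℕ}
    (hL : 0 ≤ L) (hh : 0 ≤ h) (hC : 0 ≤ C) (hp : 0 ≤ p) (hNh : N * h ≤ T)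
    (hψ : ∀ a ∈ S, ∀ b ∈ S, dist (ψ a) (ψ b) ≤ (1 + L * h) * dist a b)
    (hy_ball : ∀ t ∈ Icc 0 T, Metric.ball (y t) r ⊆ S)
    (hy : ∀ t ∈ Icc 0 T, t + h ≤ T → dist (y (t + h)) (ψ (y t)) ≤ C * h ^ (p + 1))
    (hx_zero : x 0 = y 0) (hx : ∀ n < N, x (n + 1) = ψ (x n))
    (hr : gronwallBound 0 L C T * h ^ p < r) :
    ∀ n ≤ N, x n ∈ S ∧ dist (y (n * h)) (x n) ≤ gronwallBound 0 L C T * h ^ p := by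
  have hgrid {n : ℕ} (hn : n ≤ N) : n * h ∈ Icc 0 T :=
    ⟨by positivity, le_trans (by gcongr) hNh⟩
  have hlocal : ∀ n < N, dist (y ((n + 1 : ℕ) * h)) (ψ (y (n * h))) ≤ C * h ^ p * h := by
    intro n hn
    have hsucc : ((n + 1 : ℕ) : ℝ) * h = n * h + h := by rw [Nat.cast_succ, add_one_mul]
    have hmem := hgrid (Nat.succ_le_of_lt hn)
    rw [hsucc] at hmem ⊢
    calc dist (y (n * h + h)) (ψ (y (n * h))) ≤ C * h ^ (p + 1) := hy _ (hgrid hn.le) hmem.2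
      _ = C * h ^ p * h := by rw [Real.rpow_add_one' hh (by positivity), mul_assoc]
  have hbound : gronwallBound (dist (y ((0 : ℕ) * h)) (x 0)) L (C * h ^ p) (N * h)
      ≤ gronwallBound 0 L C T * h ^ p := by
    rw [hx_zero, Nat.cast_zero, zero_mul, dist_self, gronwallBound_zero_mul]
    gcongr
    exact gronwallBound_mono le_rfl hC hL hNh
  intro n hn
  have herror : dist (y (n * h)) (x n) ≤ gronwallBound 0 L C T * h ^ p :=
    (dist_le_gronwallBound_of_ball_subset (w := fun n ↦ y (n * h)) hL hh (by positivity) hψ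
      (fun m hm ↦ hy_ball _ (hgrid hm)) hlocal hx (hbound.trans_lt hr) n hn).trans hbound
  exact ⟨hy_ball _ (hgrid hn) (Metric.mem_ball'.2 (herror.trans_lt hr)), herror⟩

end Shadowing

theorem dist_le_one_add_mul_dist_of_hasDerivWithinAt {E : Type*} [NormedAddCommGroup E]
    [NormedSpace ℝ E] {Φ Φ' : ℝ → E → E} {K : Set E} {L h₀ : ℝ} (hΦ0 : ∀ z ∈ K, Φ 0 z = z)
    (hΦ' : ∀ z ∈ K, ∀ h ∈ Icc 0 h₀, HasDerivWithinAt (Φ · z) (Φ' h z) (Icc 0 h₀) h)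
    (hLip : ∀ h ∈ Icc 0 h₀, ∀ z ∈ K, ∀ z' ∈ K, dist (Φ' h z) (Φ' h z') ≤ L * dist z z') :
    ∀ h ∈ Icc 0 h₀, ∀ z ∈ K, ∀ z' ∈ K, dist (Φ h z) (Φ h z') ≤ (1 + L * h) * dist z z' := by
  intro h hh z hz z' hz'
  have h_increment : ‖(Φ h z - Φ h z') - (z - z')‖ ≤ L * dist z z' * h := by
    simpa [hΦ0 z hz, hΦ0 z' hz', abs_of_nonneg hh.1] using
      (convex_Icc 0 h₀).norm_image_sub_le_of_norm_hasDerivWithin_le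
        (fun s hs ↦ (hΦ' z hz s hs).sub (hΦ' z' hz' s hs))
        (fun s hs ↦ (dist_eq_norm _ _).symm.trans_le (hLip s hs z hz z' hz'))
        (left_mem_Icc.2 (hh.1.trans hh.2)) hh
  calc dist (Φ h z) (Φ h z') = ‖Φ h z - Φ h z'‖ := dist_eq_norm _ _
    _ ≤ ‖z - z'‖ + ‖(Φ h z - Φ h z') - (z - z')‖ := norm_le_insert' _ _
    _ ≤ dist z z' + L * dist z z' * h := add_le_add (dist_eq_norm z z').ge h_increment
    _ = (1 + L * h) * dist z z' := by ring

theorem tendsto_const_mul_div_natCast_rpow {p : ℝ} (hp : 0 < p) (M T : ℝ) :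
    Filter.Tendsto (fun N : ℕ ↦ M * (T / N) ^ p) Filter.atTop (nhds 0) := by
  simpa [Real.zero_rpow hp.ne'] using
    ((tendsto_const_div_atTop_nhds_zero_nat T).rpow_const (Or.inr hp.le)).const_mul M

theorem one_step_method_convergence_general {X : Type*} [PseudoMetricSpace X] {T h₀ L p C : ℝ}
    (hT : 0 ≤ T) (hh₀ : 0 < h₀) (hL : 0 ≤ L) (hp : 0 < p) (hC : 0 ≤ C) {y : ℝ → X}
    (hy : ContinuousOn y (Icc 0 T)) {K : Set X} (hyK : y '' Icc 0 T ⊆ interior K) {Φ : ℝ → X → X}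
    (hΦ : ∀ h ∈ Icc 0 h₀, ∀ z ∈ K, ∀ z' ∈ K, dist (Φ h z) (Φ h z') ≤ (1 + L * h) * dist z z')
    (hLTE : ∀ t ∈ Icc 0 T, ∀ h, 0 ≤ h → h ≤ h₀ → t + h ≤ T →
      dist (y (t + h)) (Φ h (y t)) ≤ C * h ^ (p + 1)) :
    ∃ N₀ : ℕ, 0 < N₀ ∧ ∀ N : ℕ, N₀ ≤ N →
      ∀ seq : ℕ → X, seq 0 = y 0 → (∀ n < N, seq (n + 1) = Φ (T / N) (seq n)) →
        ∀ n ≤ N, seq n ∈ interior K ∧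
          dist (y (n * (T / N))) (seq n) ≤ gronwallBound 0 L C T * (T / N) ^ p := by
  obtain ⟨r, hr_pos, hrK⟩ :=
    (isCompact_Icc.image_of_continuousOn hy).exists_thickening_subset_open isOpen_interior hyK
  have hball : ∀ t ∈ Icc 0 T, Metric.ball (y t) r ⊆ interior K := fun t ht ↦
    (Metric.ball_subset_thickening (mem_image_of_mem y ht) r).trans hrK
  obtain ⟨N₀, hN₀_pos, hN₀⟩ := (Filter.atTop_basis' 1).eventually_iff.1
    (((tendsto_const_div_atTop_nhds_zero_nat T).eventually_le_const hh₀).and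
      ((tendsto_const_mul_div_natCast_rpow hp (gronwallBound 0 L C T) T).eventually_lt_const
        hr_pos))
  refine ⟨N₀, hN₀_pos, fun N hN seq hseq_zero hseq_succ ↦ ?_⟩
  obtain ⟨hh_le, hbound_lt⟩ := hN₀ hN
  have hh : 0 ≤ T / (N : ℝ) := by positivity
  have hNh : N * (T / N) = T := mul_div_cancel₀ T (Nat.cast_ne_zero.2 (by omega))
  exact mem_and_dist_curve_le_gronwallBound_mul_rpow hL hh hC hp.le hNh.le
    (fun a ha b hb ↦ hΦ _ ⟨hh, hh_le⟩ a (interior_subset ha) b (interior_subset hb))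
    hball (fun t ht ↦ hLTE t ht _ hh hh_le) hseq_zero hseq_succ hbound_lt

/-- Convergence of abstract explicit one-step methods of order `p` with equidistant step
size `h = T/N` for the autonomous scalar IVP `y' = f(y)`, `y(0) = y₀` on `[0,T]`:
under consistency, a Lipschitz condition for `∂Φ/∂h`, and a local truncation error bound
`C h^{p+1}`, the global error is at most `M h^p` with `M = (C/L)(e^{LT} − 1)`. -/
theorem one_step_method_convergence
    (D : Set ℝ) (hD : IsOpen D)
    (f : ℝ → ℝ)
    (hf : ∀ x ∈ D, ∃ s ∈ nhds x, ∃ L : NNReal, LipschitzOnWith L f s)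
    (T : ℝ) (hT : 0 < T)
    (y : ℝ → ℝ) (y₀ : ℝ)
    (hyD : ∀ t ∈ Icc (0 : ℝ) T, y t ∈ D)
    (hy : ∀ t ∈ Icc (0 : ℝ) T, HasDerivWithinAt y (f (y t)) (Icc (0 : ℝ) T) t)
    (hy0 : y 0 = y₀)
    (K : Set ℝ) (hK : IsCompact K) (hKD : K ⊆ D)
    (hyK : y '' Icc (0 : ℝ) T ⊆ interior K)
    (h₀ : ℝ) (hh₀ : 0 < h₀)
    (Φ : ℝ → ℝ → ℝ)
    (hΦcont : ContinuousOn (fun q : ℝ × ℝ => Φ q.1 q.2) (Icc (0 : ℝ) h₀ ×ˢ K))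
    -- Consistency
    (Φ' : ℝ → ℝ → ℝ)
    (hΦ0 : ∀ z ∈ K, Φ 0 z = z)
    (hΦ' : ∀ z ∈ K, ∀ h ∈ Icc (0 : ℝ) h₀,
      HasDerivWithinAt (fun s => Φ s z) (Φ' h z) (Icc (0 : ℝ) h₀) h)
    (hΦ'cont : ContinuousOn (fun q : ℝ × ℝ => Φ' q.1 q.2) (Icc (0 : ℝ) h₀ ×ˢ K))
    (hΦ'0 : ∀ z ∈ K, Φ' 0 z = f z)
    -- Lipschitz condition
    (L : ℝ) (hL : 0 < L)
    (hLip : ∀ h ∈ Icc (0 : ℝ) h₀, ∀ z ∈ K, ∀ z' ∈ K,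
      |Φ' h z - Φ' h z'| ≤ L * |z - z'|)
    -- Local truncation error
    (p : ℝ) (hp : 1 ≤ p) (C : ℝ) (hC : 0 ≤ C)
    (hLTE : ∀ t ∈ Icc (0 : ℝ) T, ∀ h : ℝ, 0 ≤ h → h ≤ h₀ → t + h ≤ T →
      |y (t + h) - Φ h (y t)| ≤ C * h ^ (p + 1)) :
    ∃ N₀ : ℕ, 0 < N₀ ∧ ∀ N : ℕ, N₀ ≤ N →
      ∀ seq : ℕ → ℝ, seq 0 = y₀ → (∀ n < N, seq (n + 1) = Φ (T / N) (seq n)) →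
        ∀ n ≤ N, seq n ∈ interior K ∧
          |y (n * (T / N)) - seq n| ≤ C / L * (Real.exp (L * T) - 1) * (T / N) ^ p := by
  have hΦ_dist := dist_le_one_add_mul_dist_of_hasDerivWithinAt hΦ0 hΦ' hLip
  simpa only [Real.dist_eq, gronwallBound_of_K_ne_0 hL.ne', zero_mul, zero_add, hy0] using
    one_step_method_convergence_general hT.le hh₀ hL.le (one_pos.trans_le hp) hC
      (fun t ht ↦ (hy t ht).continuousWithinAt) hyK hΦ_dist hLTE
end

section
/- Let r ∈ ℕ₀, let D ⊆ ℝ be open, let f : D → ℝ be (r+1)-times continuously differentiable, let T > 0, and let y : [0,T] → D solve y'(t) = f(y(t)) on [0,T]. Let K ⊆ D be a compact set with y([0,T]) contained in the interior of K, let h₀ > 0, and let Φ : [0,h₀] × K → ℝ be such that for every y ∈ K the function h ↦ Φ(h,y) satisfies Φ(0,y) = y and ∂Φ/∂h(h,y) = Σ_{j=0}^{r} (f^{(j)}(y)/j!)(Φ(h,y) − y)^j for all h ∈ [0,h₀], and such that the partial derivative ∂^{r+2}Φ/∂h^{r+2} exists and is continuous on [0,h₀] × K. Then there exists a constant C ≥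 0, independent of t and h, such that |y(t+h) − Φ(h,y(t))| ≤ C h^{r+2} whenever t ∈ [0,T], 0 ≤ h ≤ h₀ and t + h ≤ T. -/
open Finset Set

/-!
For fixed `z`, `Φ · z` solves the differential equation whose field is the Taylor polynomial of `f`
at `z`. Since `y` is Lipschitz, replacing `f` by its Taylor polynomial at `y t` changes the field
along `y` on `[t, t + h]` by `O(h ^ (r + 1))`, and Grönwall's inequality integrates this defect to
an error `O(h ^ (r + 2))`. The constants are uniform in `t` because the polynomials have a common
Lipschitz constant on bounded sets, and all solutions `Φ · z` with `z ∈ y([0, T])` stay in a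
bounded set: solutions depend continuously on `z`, as the Taylor field is jointly `C¹` in its base
point and its argument, and `y([0, T])` is compact.
-/

open Metric
open scoped NNReal Nat

lemma locallyLipschitzOn_of_contDiffOn_of_isOpen {𝕜 E F : Type*} [RCLike 𝕜] [NormedAddCommGroup E]
    [NormedSpace 𝕜 E] [NormedAddCommGroup F] [NormedSpace 𝕜 F] {f : E → F} {s : Set E}
    (hf : ContDiffOn 𝕜 1 f s) (hs : IsOpen s) : LocallyLipschitzOn s f := fun _ hx ↦
  let ⟨K, t, ht, hK⟩ := (hf.contDiffAt (hs.mem_nhds hx)).exists_lipschitzOnWith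
  ⟨K, t, mem_nhdsWithin_of_mem_nhds ht, hK⟩

lemma contDiffOn_iteratedDerivWithin {𝕜 E : Type*} [NontriviallyNormedField 𝕜]
    [NormedAddCommGroup E] [NormedSpace 𝕜 E] {f : 𝕜 → E} {m n : WithTop ℕ∞} {k : ℕ} {s : Set 𝕜}
    (hf : ContDiffOn 𝕜 n f s) (hs : UniqueDiffOn 𝕜 s) (hmn : m + k ≤ n) :
    ContDiffOn 𝕜 m (iteratedDerivWithin k f s) s := by
  rw [iteratedDerivWithin_eq_equiv_comp]
  exact (LinearIsometryEquiv.contDiff _).comp_contDiffOn fun x hx ↦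
    (hf x hx).iteratedFDerivWithin_right hs hmn hx

section Gronwall

variable {E : Type*} [NormedAddCommGroup E] [NormedSpace ℝ E]

lemma gronwallBound_zero_le {K ε x : ℝ} (hK : 0 ≤ K) (hε : 0 ≤ ε) :
    gronwallBound 0 K ε x ≤ ε * x * Real.exp (K * x) := by
  rcases hK.eq_or_lt' with rfl | hK
  · simp [gronwallBound_K0]
  have hexp : Real.exp (K * x) - 1 ≤ K * x * Real.exp (K * x) := by
    have h := mul_le_mul_of_nonneg_right (Real.one_sub_le_exp_neg (K * x)) (Real.exp_nonneg (K * x))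
    rw [← Real.exp_add, neg_add_cancel, Real.exp_zero] at h
    linarith
  calc gronwallBound 0 K ε x = ε / K * (Real.exp (K * x) - 1) := by
        simp only [gronwallBound_of_K_ne_0 hK.ne', zero_mul, zero_add]
    _ ≤ ε / K * (K * x * Real.exp (K * x)) := by gcongr
    _ = ε * x * Real.exp (K * x) := by field

lemma hasDerivWithinAt_Ici_of_isIntegralCurveOn_Icc {γ : ℝ → E} {v : ℝ → E → E} {a b t : ℝ}
    (hγ : IsIntegralCurveOn γ v (Icc a b)) (ht : t ∈ Ico a b) :
    HasDerivWithinAt γ (v t (γ t)) (Ici t) t :=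
  (hγ t (Ico_subset_Icc_self ht)).mono_of_mem_nhdsWithin (Icc_mem_nhdsGE_of_mem ht)

lemma dist_le_mul_exp_of_lipschitzOnWith_tube {v : ℝ → E → E} {K : ℝ≥0} {γ γ₀ : ℝ → E}
    {a b ρ : ℝ} (hρ : 0 < ρ) (hv : ∀ t ∈ Ico a b, LipschitzOnWith K (v t) (closedBall (γ₀ t) ρ))
    (hγ : IsIntegralCurveOn γ v (Icc a b)) (hγ₀ : IsIntegralCurveOn γ₀ v (Icc a b))
    (hab : dist (γ a) (γ₀ a) ≤ ρ * Real.exp ((K + 1) * (a - b))) :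
    ∀ t ∈ Icc a b, dist (γ t) (γ₀ t) ≤ ρ * Real.exp ((K + 1) * (t - b)) := by
  -- At a first contact with this barrier `γ` is still in the tube, where the distance grows at
  -- rate at most `K`, less than the rate `K + 1` of the barrier.
  have barrier_deriv (t : ℝ) : HasDerivAt (fun t ↦ ρ * Real.exp ((K + 1) * (t - b)))
      ((K + 1) * (ρ * Real.exp ((K + 1) * (t - b)))) t := by
    convert! ((((hasDerivAt_id t).sub_const b).const_mul ((K : ℝ) + 1)).exp.const_mul ρ) using 1
    simp only [id]; ring
  simp only [dist_eq_norm] at hab ⊢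
  refine image_norm_le_of_norm_deriv_right_lt_deriv_boundary' (hγ.continuousOn.sub hγ₀.continuousOn)
    (fun t ht ↦ (hasDerivWithinAt_Ici_of_isIntegralCurveOn_Icc hγ ht).sub
      (hasDerivWithinAt_Ici_of_isIntegralCurveOn_Icc hγ₀ ht)) hab
    (fun t _ ↦ (barrier_deriv t).continuousAt.continuousWithinAt)
    (fun t _ ↦ (barrier_deriv t).hasDerivWithinAt) fun t ht hcontact ↦ ?_
  have barrier_le : ρ * Real.exp ((K + 1) * (t - b)) ≤ ρ :=
    mul_le_of_le_one_right hρ.le (Real.exp_le_one_iff.2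
      (mul_nonpos_of_nonneg_of_nonpos (by positivity) (sub_nonpos.2 ht.2.le)))
  have hmem : γ t ∈ closedBall (γ₀ t) ρ :=
    mem_closedBall_iff_norm.2 (hcontact.trans_le barrier_le)
  calc ‖v t (γ t) - v t (γ₀ t)‖ ≤ K * ‖γ t - γ₀ t‖ :=
        (hv t ht).norm_sub_le hmem (mem_closedBall_self hρ.le)
    _ = K * (ρ * Real.exp ((K + 1) * (t - b))) := by rw [← hcontact]; rfl
    _ < (K + 1) * (ρ * Real.exp ((K + 1) * (t - b))) := by gcongr; exact lt_add_one _

theorem exists_pos_forall_dist_le_of_isIntegralCurveOn [ProperSpace E] {v : E → E} {U : Set E}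
    (hU : IsOpen U) (hv : LocallyLipschitzOn U v) {γ₀ : ℝ → E} {a b : ℝ}
    (hγ₀ : IsIntegralCurveOn γ₀ (fun _ ↦ v) (Icc a b)) (hγ₀U : MapsTo γ₀ (Icc a b) U)
    {ε : ℝ} (hε : 0 < ε) :
    ∃ δ > 0, ∀ γ : ℝ → E, IsIntegralCurveOn γ (fun _ ↦ v) (Icc a b) →
      dist (γ a) (γ₀ a) ≤ δ → ∀ t ∈ Icc a b, dist (γ t) (γ₀ t) ≤ ε := by
  have hcpt : IsCompact (γ₀ '' Icc a b) := isCompact_Icc.image_of_continuousOn hγ₀.continuousOn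
  obtain ⟨η, hη, hηU⟩ := hcpt.exists_cthickening_subset_open hU hγ₀U.image_subset
  obtain ⟨K, hK⟩ := (hv.mono hηU).exists_lipschitzOnWith_of_compact hcpt.cthickening
  set ρ := min ε η
  have hρ : 0 < ρ := lt_min hε hη
  refine ⟨ρ * Real.exp ((K + 1) * (a - b)), by positivity, fun γ hγ hγa t ht ↦ ?_⟩
  have htube : ∀ t ∈ Ico a b, LipschitzOnWith K v (closedBall (γ₀ t) ρ) := fun t ht ↦
    hK.mono <| (closedBall_subset_closedBall (min_le_right _ _)).trans <|
      closedBall_subset_cthickening (mem_image_of_mem _ (Ico_subset_Icc_self ht)) η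
  calc dist (γ t) (γ₀ t) ≤ ρ * Real.exp ((K + 1) * (t - b)) :=
        dist_le_mul_exp_of_lipschitzOnWith_tube hρ htube hγ hγ₀ hγa t ht
    _ ≤ ρ := mul_le_of_le_one_right hρ.le (Real.exp_le_one_iff.2
        (mul_nonpos_of_nonneg_of_nonpos (by positivity) (sub_nonpos.2 ht.2)))
    _ ≤ ε := min_le_left _ _

theorem exists_forall_norm_le_of_isIntegralCurveOn [ProperSpace E] {v : E → E} {U S : Set E}
    (hU : IsOpen U) (hv : LocallyLipschitzOn U v) (hS : IsCompact S) {a b : ℝ}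
    (hex : ∀ p ∈ S, ∃ γ : ℝ → E,
      γ a = p ∧ IsIntegralCurveOn γ (fun _ ↦ v) (Icc a b) ∧ MapsTo γ (Icc a b) U) :
    ∃ R, ∀ γ : ℝ → E, IsIntegralCurveOn γ (fun _ ↦ v) (Icc a b) → γ a ∈ S →
      ∀ t ∈ Icc a b, ‖γ t‖ ≤ R := by
  refine hS.induction_on (p := fun S ↦ ∃ R, ∀ γ : ℝ → E,
      IsIntegralCurveOn γ (fun _ ↦ v) (Icc a b) → γ a ∈ S → ∀ t ∈ Icc a b, ‖γ t‖ ≤ R)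
    ⟨0, by simp⟩ ?mono ?union ?nhds
  case mono => exact fun S₁ S₂ hS₁₂ ⟨R, hR⟩ ↦ ⟨R, fun γ hγ hγa ↦ hR γ hγ (hS₁₂ hγa)⟩
  case union =>
    rintro S₁ S₂ ⟨R₁, hR₁⟩ ⟨R₂, hR₂⟩
    refine ⟨max R₁ R₂, fun γ hγ hγa t ht ↦ ?_⟩
    rcases hγa with hγa | hγa
    · exact (hR₁ γ hγ hγa t ht).trans (le_max_left _ _)
    · exact (hR₂ γ hγ hγa t ht).trans (le_max_right _ _)
  case nhds =>
    intro p hp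
    obtain ⟨γ₀, rfl, hγ₀, hγ₀U⟩ := hex p hp
    obtain ⟨δ, hδ, hclose⟩ := exists_pos_forall_dist_le_of_isIntegralCurveOn hU hv hγ₀ hγ₀U one_pos
    obtain ⟨R, hR⟩ := isCompact_Icc.exists_bound_of_continuousOn hγ₀.continuousOn
    refine ⟨closedBall (γ₀ a) δ, mem_nhdsWithin_of_mem_nhds (closedBall_mem_nhds _ hδ), R + 1,
      fun γ hγ hγa t ht ↦ ?_⟩
    calc ‖γ t‖ ≤ ‖γ₀ t‖ + dist (γ t) (γ₀ t) := by
          rw [dist_eq_norm]; exact norm_le_norm_add_norm_sub' _ _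
      _ ≤ R + 1 := add_le_add (hR t ht) (hclose γ hγ hγa t ht)

lemma dist_le_mul_exp_of_approx_field {f v : ℝ → E → E} {s : Set E} {K : ℝ≥0} {y w : ℝ → E}
    {a b ε : ℝ} (hv : ∀ t ∈ Ico a b, LipschitzOnWith K (v t) s) (hε : 0 ≤ ε)
    (hy : IsIntegralCurveOn y f (Icc a b)) (hys : MapsTo y (Icc a b) s)
    (hw : IsIntegralCurveOn w v (Icc a b)) (hws : MapsTo w (Icc a b) s)
    (ha : y a = w a) (hfv : ∀ t ∈ Ico a b, dist (f t (y t)) (v t (y t)) ≤ ε) :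
    ∀ t ∈ Icc a b, dist (y t) (w t) ≤ ε * (t - a) * Real.exp (K * (t - a)) := by
  intro t ht
  have hgronwall := dist_le_of_approx_trajectories_ODE_of_mem (s := fun _ ↦ s) (εg := 0) hv
    hy.continuousOn (fun t ht ↦ hasDerivWithinAt_Ici_of_isIntegralCurveOn_Icc hy ht)
    hfv (fun t ht ↦ hys (Ico_subset_Icc_self ht))
    hw.continuousOn (fun t ht ↦ hasDerivWithinAt_Ici_of_isIntegralCurveOn_Icc hw ht)
    (fun t _ ↦ (dist_self _).le) (fun t ht ↦ hws (Ico_subset_Icc_self ht))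
    (dist_le_zero.2 ha) t ht
  rw [add_zero] at hgronwall
  exact hgronwall.trans (gronwallBound_zero_le K.coe_nonneg hε)

theorem exists_forall_norm_le_of_isIntegralCurveOn_param {P : Type*} [NormedAddCommGroup P]
    [NormedSpace ℝ P] [ProperSpace P] [ProperSpace E] {D S : Set P} (hD : IsOpen D)
    {F : P → E → E} (hF : LocallyLipschitzOn (D ×ˢ univ) F.uncurry) (hS : IsCompact S)
    (hSD : S ⊆ D) {Γ : P → ℝ → E} {a b : ℝ} (hΓa : ContinuousOn (fun z ↦ Γ z a) S)
    (hΓ : ∀ z ∈ S, IsIntegralCurveOn (Γ z) (fun _ ↦ F z) (Icc a b)) :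
    ∃ R, ∀ z ∈ S, ∀ t ∈ Icc a b, ‖Γ z t‖ ≤ R := by
  -- Adjoining `z' = 0` turns the parameter into part of the initial value.
  let v : P × E → P × E := fun p ↦ (0, F p.1 p.2)
  have hv : LocallyLipschitzOn (D ×ˢ univ) v := fun p hp ↦
    let ⟨K, V, hV, hK⟩ := hF hp
    ⟨max 0 K, V, hV, (LipschitzWith.const 0).lipschitzOnWith.prodMk hK⟩
  have hcurve : ∀ z ∈ S, IsIntegralCurveOn (fun t ↦ (z, Γ z t)) (fun _ ↦ v) (Icc a b) :=
    fun z hz t ht ↦ (hasDerivWithinAt_const t _ z).prodMk (hΓ z hz t ht)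
  obtain ⟨R, hR⟩ := exists_forall_norm_le_of_isIntegralCurveOn (hD.prod isOpen_univ) hv
    (hS.image_of_continuousOn (continuousOn_id.prodMk hΓa))
    (forall_mem_image.2 fun z hz ↦ ⟨_, rfl, hcurve z hz, fun t _ ↦ ⟨hSD hz, mem_univ _⟩⟩)
  exact ⟨R, fun z hz t ht ↦ (norm_snd_le (z, Γ z t)).trans
    (hR _ (hcurve z hz) (mem_image_of_mem _ hz) t ht)⟩

end Gronwall

section ModelField

variable {E : Type*} [NormedAddCommGroup E] [NormedSpace ℝ E]

lemma norm_sub_le_mul_pow_succ_of_local_model {f g : E → E} {A : Set E} {K : ℝ≥0}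
    {y w : ℝ → E} {h B c : ℝ} {p : ℕ} (hh : 0 ≤ h) (hB : 0 ≤ B) (hc : 0 ≤ c)
    (hg : LipschitzOnWith K g A)
    (hy : IsIntegralCurveOn y (fun _ ↦ f) (Icc 0 h)) (hyA : MapsTo y (Icc 0 h) A)
    (hw : IsIntegralCurveOn w (fun _ ↦ g) (Icc 0 h)) (hwA : MapsTo w (Icc 0 h) A)
    (h0 : y 0 = w 0) (hfB : ∀ s ∈ Icc 0 h, ‖f (y s)‖ ≤ B)
    (hfg : ∀ s ∈ Icc 0 h, ‖f (y s) - g (y s)‖ ≤ c * ‖y s - y 0‖ ^ p) :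
    ‖y h - w h‖ ≤ c * B ^ p * Real.exp (K * h) * h ^ (p + 1) := by
  have hdefect : ∀ s ∈ Ico 0 h, dist (f (y s)) (g (y s)) ≤ c * (B * h) ^ p := by
    intro s hs
    have hs' : s ∈ Icc 0 h := Ico_subset_Icc_self hs
    have hys : ‖y s - y 0‖ ≤ B * h := calc
      ‖y s - y 0‖ ≤ B * ‖s - 0‖ :=
        (convex_Icc 0 h).norm_image_sub_le_of_norm_hasDerivWithin_le hy hfB (left_mem_Icc.2 hh) hs'
      _ ≤ B * h := by rw [sub_zero, Real.norm_of_nonneg hs.1]; gcongr; exact hs.2.le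
    rw [dist_eq_norm]
    exact (hfg s hs').trans (by gcongr)
  calc ‖y h - w h‖ = dist (y h) (w h) := (dist_eq_norm _ _).symm
    _ ≤ c * (B * h) ^ p * (h - 0) * Real.exp (K * (h - 0)) :=
        dist_le_mul_exp_of_approx_field (fun _ _ ↦ hg) (by positivity) hy hyA hw hwA h0 hdefect h
          (right_mem_Icc.2 hh)
    _ = c * B ^ p * Real.exp (K * h) * h ^ (p + 1) := by ring_nf

theorem exists_local_error_le_mul_pow_succ_of_local_model [ProperSpace E] {D : Set E}
    (hD : IsOpen D) {f : E → E} {F : E → E → E} (hF : LocallyLipschitzOn (D ×ˢ univ) F.uncurry)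
    {y : ℝ → E} {T : ℝ} (hf : ContinuousOn f (y '' Icc 0 T))
    (hy : IsIntegralCurveOn y (fun _ ↦ f) (Icc 0 T)) (hyD : y '' Icc 0 T ⊆ D)
    {c : ℝ} {p : ℕ} (hc : 0 ≤ c)
    (hfF : ∀ z ∈ y '' Icc 0 T, ∀ x ∈ y '' Icc 0 T, ‖f x - F z x‖ ≤ c * ‖x - z‖ ^ p)
    {Φ : ℝ → E → E} {h₀ : ℝ} (hΦ0 : ∀ z ∈ y '' Icc 0 T, Φ 0 z = z)
    (hΦ : ∀ z ∈ y '' Icc 0 T, IsIntegralCurveOn (Φ · z) (fun _ ↦ F z) (Icc 0 h₀)) :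
    ∃ C, 0 ≤ C ∧ ∀ t ∈ Icc 0 T, ∀ h, 0 ≤ h → h ≤ h₀ → t + h ≤ T →
      ‖y (t + h) - Φ h (y t)‖ ≤ C * h ^ (p + 1) := by
  have hS : IsCompact (y '' Icc 0 T) := isCompact_Icc.image_of_continuousOn hy.continuousOn
  obtain ⟨R₁, -, hR₁⟩ := hS.isBounded.exists_pos_norm_le
  obtain ⟨R₂, hR₂⟩ := exists_forall_norm_le_of_isIntegralCurveOn_param hD hF hS hyD
    (Γ := fun z s ↦ Φ s z) (continuousOn_id.congr hΦ0) hΦ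
  set A : Set E := closedBall 0 (max R₁ R₂)
  obtain ⟨B, hB, hfB⟩ := (hS.image_of_continuousOn hf).isBounded.exists_pos_norm_le
  obtain ⟨K, hK⟩ := (hF.mono (prod_mono hyD (subset_univ A))).exists_lipschitzOnWith_of_compact
    (hS.prod (isCompact_closedBall _ _))
  refine ⟨c * B ^ p * Real.exp (K * T), by positivity, fun t ht h hh hhh₀ hth ↦ ?_⟩
  have hz : y t ∈ y '' Icc 0 T := mem_image_of_mem y ht
  have hmaps : MapsTo (t + ·) (Icc 0 h) (Icc 0 T) := fun s hs ↦
    ⟨add_nonneg ht.1 hs.1, by linarith [hs.2]⟩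
  have hyS : ∀ s ∈ Icc 0 h, y (t + s) ∈ y '' Icc 0 T := fun s hs ↦ mem_image_of_mem y (hmaps hs)
  have hshift : IsIntegralCurveOn (fun s ↦ y (t + s)) (fun _ ↦ f) (Icc 0 h) := by
    intro s hs
    simpa using! (hy (t + s) (hmaps hs)).scomp s ((hasDerivWithinAt_id s _).const_add t) hmaps
  have hKz : LipschitzOnWith K (F (y t)) A := fun x hx x' hx' ↦ by
    simpa [Prod.edist_eq] using hK (mk_mem_prod hz hx) (mk_mem_prod hz hx')
  calc ‖y (t + h) - Φ h (y t)‖ ≤ c * B ^ p * Real.exp (K * h) * h ^ (p + 1) :=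
        norm_sub_le_mul_pow_succ_of_local_model (y := fun s ↦ y (t + s)) hh hB.le hc hKz hshift
          (fun s hs ↦ mem_closedBall_zero_iff.2 (le_max_of_le_left (hR₁ _ (hyS s hs))))
          ((hΦ _ hz).mono (Icc_subset_Icc_right hhh₀))
          (fun s hs ↦ mem_closedBall_zero_iff.2
            (le_max_of_le_right (hR₂ _ hz s ⟨hs.1, hs.2.trans hhh₀⟩)))
          (by simp [hΦ0 _ hz]) (fun s hs ↦ hfB _ (mem_image_of_mem f (hyS s hs)))
          (fun s hs ↦ by simpa using hfF _ hz _ (hyS s hs))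
    _ ≤ c * B ^ p * Real.exp (K * T) * h ^ (p + 1) := by gcongr; linarith [ht.1]

end ModelField

section Taylor

variable {E : Type*} [NormedAddCommGroup E] [NormedSpace ℝ E]

theorem norm_sub_taylorWithinEval_le {f : ℝ → E} {n : ℕ} {s : Set ℝ} {z x M : ℝ}
    (hs : UniqueDiffOn ℝ s) (hf : ContDiffOn ℝ (n + 1) f s) (hzx : uIcc z x ⊆ s)
    (hM : ∀ t ∈ uIcc z x, ‖iteratedDerivWithin (n + 1) f s t‖ ≤ M) :
    ‖f x - taylorWithinEval f n s z x‖ ≤ M * ‖x - z‖ ^ (n + 1) := by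
  have hderiv : ∀ t ∈ uIcc z x, HasDerivWithinAt (fun t ↦ taylorWithinEval f n s t x)
      (((n ! : ℝ)⁻¹ * (x - t) ^ n) • iteratedDerivWithin (n + 1) f s t) (uIcc z x) t := fun t ht ↦
    (hasDerivWithinAt_taylorWithinEval hs self_mem_nhdsWithin (hzx ht) subset_rfl
      (hf.of_le (by simp)) (hf.differentiableOn_iteratedDerivWithin
        (by exact_mod_cast n.lt_succ_self) hs t (hzx ht))).mono hzx
  have hbound : ∀ t ∈ uIcc z x,
      ‖((n ! : ℝ)⁻¹ * (x - t) ^ n) • iteratedDerivWithin (n + 1) f s t‖ ≤ ‖x - z‖ ^ n * M := by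
    intro t ht
    have hfact : ‖(n ! : ℝ)⁻¹‖ ≤ 1 := by
      rw [norm_inv, Real.norm_natCast]
      exact inv_le_one_of_one_le₀ (mod_cast n.factorial_pos)
    have htx : ‖x - t‖ ≤ ‖x - z‖ := abs_sub_right_of_mem_uIcc ht
    rw [norm_smul, norm_mul, norm_pow]
    calc _ ≤ 1 * ‖x - z‖ ^ n * M := by gcongr; exact hM t ht
      _ = _ := by rw [one_mul]
  calc ‖f x - taylorWithinEval f n s z x‖
      = ‖taylorWithinEval f n s x x - taylorWithinEval f n s z x‖ := by rw [taylorWithinEval_self]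
    _ ≤ ‖x - z‖ ^ n * M * ‖x - z‖ :=
        (convex_uIcc z x).norm_image_sub_le_of_norm_hasDerivWithin_le hderiv hbound
          left_mem_uIcc right_mem_uIcc
    _ = M * ‖x - z‖ ^ (n + 1) := by ring

theorem exists_forall_norm_sub_taylorWithinEval_le {f : ℝ → E} {n : ℕ} {s J : Set ℝ}
    (hs : UniqueDiffOn ℝ s) (hf : ContDiffOn ℝ (n + 1) f s) (hJ : IsCompact J)
    (hJconn : J.OrdConnected) (hJs : J ⊆ s) :
    ∃ M, 0 ≤ M ∧ ∀ z ∈ J, ∀ x ∈ J,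
      ‖f x - taylorWithinEval f n s z x‖ ≤ M * ‖x - z‖ ^ (n + 1) := by
  obtain ⟨M, hM⟩ := hJ.exists_bound_of_continuousOn
    ((hf.continuousOn_iteratedDerivWithin (m := n + 1) (by norm_cast) hs).mono hJs)
  have hMpos : ∀ t ∈ J, ‖iteratedDerivWithin (n + 1) f s t‖ ≤ max M 0 := fun t ht ↦
    (hM t ht).trans (le_max_left _ _)
  refine ⟨max M 0, le_max_right _ _, fun z hz x hx ↦ ?_⟩
  have hzx : uIcc z x ⊆ J := hJconn.uIcc_subset hz hx
  exact norm_sub_taylorWithinEval_le hs hf (hzx.trans hJs) fun t ht ↦ hMpos t (hzx ht)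

theorem contDiffOn_uncurry_taylorWithinEval {f : ℝ → E} {m : WithTop ℕ∞} {n : ℕ} {s : Set ℝ}
    (hf : ContDiffOn ℝ (m + n) f s) (hs : UniqueDiffOn ℝ s) :
    ContDiffOn ℝ m (taylorWithinEval f n s).uncurry (s ×ˢ univ) := by
  have hsum : (taylorWithinEval f n s).uncurry = fun p : ℝ × ℝ ↦ ∑ k ∈ Finset.range (n + 1),
      ((k ! : ℝ)⁻¹ * (p.2 - p.1) ^ k) • iteratedDerivWithin k f s p.1 :=
    funext fun p ↦ taylor_within_apply f n s p.1 p.2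
  rw [hsum]
  refine ContDiffOn.sum fun k hk ↦ ContDiffOn.smul (by fun_prop) ?_
  have hkn : (k : WithTop ℕ∞) ≤ n := mod_cast Finset.mem_range_succ_iff.1 hk
  exact (contDiffOn_iteratedDerivWithin hf hs (by gcongr)).comp contDiffOn_fst fun _ hp ↦ hp.1

end Taylor

theorem taylor_method_local_truncation_error_general
    (r : ℕ) (D : Set ℝ) (hD : IsOpen D)
    (f : ℝ → ℝ) (hf : ContDiffOn ℝ (r + 1) f D)
    (T : ℝ) (y : ℝ → ℝ)
    (hyD : ∀ t ∈ Icc (0 : ℝ) T, y t ∈ D)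
    (hy : ∀ t ∈ Icc (0 : ℝ) T, HasDerivWithinAt y (f (y t)) (Icc (0 : ℝ) T) t)
    (h₀ : ℝ) (Φ : ℝ → ℝ → ℝ)
    (hΦ0 : ∀ z ∈ y '' Icc (0 : ℝ) T, Φ 0 z = z)
    (hΦode : ∀ z ∈ y '' Icc (0 : ℝ) T, ∀ h ∈ Icc (0 : ℝ) h₀,
      HasDerivWithinAt (fun s => Φ s z)
        (∑ j ∈ range (r + 1),
          iteratedDerivWithin j f D z / (Nat.factorial j) * (Φ h z - z) ^ j)
        (Icc (0 : ℝ) h₀) h) :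
    ∃ C : ℝ, 0 ≤ C ∧ ∀ t ∈ Icc (0 : ℝ) T, ∀ h : ℝ, 0 ≤ h → h ≤ h₀ → t + h ≤ T →
      |y (t + h) - Φ h (y t)| ≤ C * h ^ (r + 2) := by
  have hycont : ContinuousOn y (Icc 0 T) := fun t ht ↦ (hy t ht).continuousWithinAt
  have hJD : y '' Icc 0 T ⊆ D := image_subset_iff.2 hyD
  obtain ⟨c, hc, hremainder⟩ := exists_forall_norm_sub_taylorWithinEval_le hD.uniqueDiffOn hf
    (isCompact_Icc.image_of_continuousOn hycont)
    (isPreconnected_Icc.image y hycont).ordConnected hJD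
  have hlip : LocallyLipschitzOn (D ×ˢ univ) (taylorWithinEval f r D).uncurry :=
    locallyLipschitzOn_of_contDiffOn_of_isOpen
      (contDiffOn_uncurry_taylorWithinEval (add_comm (r : WithTop ℕ∞) 1 ▸ hf) hD.uniqueDiffOn)
      (hD.prod isOpen_univ)
  refine exists_local_error_le_mul_pow_succ_of_local_model hD hlip (hf.continuousOn.mono hJD) hy hJD
    hc hremainder hΦ0 fun z hz h hh ↦ ?_
  convert! hΦode z hz h hh using 1
  simp only [taylor_within_apply, smul_eq_mul]
  exact Finset.sum_congr rfl fun j _ ↦ by ring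

/-- Local truncation error of the one-step method obtained by adaptively replacing `f` in
`y' = f(y)` by its `r`-th order Taylor polynomial and solving the resulting equation
exactly: the error over one step of size `h` is `O(h^{r+2})`, uniformly for `t ∈ [0,T]`. -/
theorem taylor_method_local_truncation_error
    (r : ℕ) (D : Set ℝ) (hD : IsOpen D)
    (f : ℝ → ℝ) (hf : ContDiffOn ℝ (r + 1) f D)
    (T : ℝ) (hT : 0 < T) (y : ℝ → ℝ)
    (hyD : ∀ t ∈ Icc (0 : ℝ) T, y t ∈ D)
    (hy : ∀ t ∈ Icc (0 : ℝ) T, HasDerivWithinAt y (f (y t)) (Icc (0 : ℝ) T) t)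
    (K : Set ℝ) (hK : IsCompact K) (hKD : K ⊆ D)
    (hyK : y '' Icc (0 : ℝ) T ⊆ interior K)
    (h₀ : ℝ) (hh₀ : 0 < h₀)
    (Φ : ℝ → ℝ → ℝ)
    (hΦ0 : ∀ z ∈ K, Φ 0 z = z)
    (hΦode : ∀ z ∈ K, ∀ h ∈ Icc (0 : ℝ) h₀,
      HasDerivWithinAt (fun s => Φ s z)
        (∑ j ∈ range (r + 1),
          iteratedDerivWithin j f D z / (Nat.factorial j) * (Φ h z - z) ^ j)
        (Icc (0 : ℝ) h₀) h)
    (hΦsmooth : ∀ z ∈ K, ContDiffOn ℝ (r + 2) (fun s => Φ s z) (Icc (0 : ℝ) h₀))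
    (hΦcont : ContinuousOn
      (fun p : ℝ × ℝ =>
        iteratedDerivWithin (r + 2) (fun s => Φ s p.2) (Icc (0 : ℝ) h₀) p.1)
      (Icc (0 : ℝ) h₀ ×ˢ K)) :
    ∃ C : ℝ, 0 ≤ C ∧ ∀ t ∈ Icc (0 : ℝ) T, ∀ h : ℝ, 0 ≤ h → h ≤ h₀ → t + h ≤ T →
      |y (t + h) - Φ h (y t)| ≤ C * h ^ (r + 2) := by
  have hyK' : y '' Icc 0 T ⊆ K := hyK.trans interior_subset
  exact taylor_method_local_truncation_error_general r D hD f hf T y hyD hy h₀ Φ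
    (fun z hz ↦ hΦ0 z (hyK' hz)) fun z hz ↦ hΦode z (hyK' hz)
end

section
/- Let r ∈ ℕ₀, let D ⊆ ℝ be open, let f : D → ℝ be (r+1)-times continuously differentiable, let T > 0, and let y : [0,T] → D solve y'(t) = f(y(t)) on [0,T]. Fix t ∈ [0,T] and h₀ > 0, and suppose Φ : [0,h₀] → ℝ is (r+2)-times differentiable with Φ(0) = y(t) and Φ'(h) = Σ_{j=0}^{r} (f^{(j)}(y(t))/j!)(Φ(h) − y(t))^j for all h ∈ [0,h₀]. Then for every n = 0, 1, …, r+1 one has (d/dh)^n [y(t+h)] at h = 0 equal to Φ^{(n)}(0); that is, the first r+1 derivatives (and the value) of the exact solution h ↦ y(t+h) and of the Taylor-approximated solution Φ agree at h = 0. -/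
open Finset Set

/-!
Differentiating `u' = f ∘ u` at a point expresses the derivative of order `n + 1` of a solution `u`,
by Faà di Bruno's formula, through the derivatives of `f` at the value of `u` and the derivatives
of `u`, both of order at most `n`. Hence two solutions with the same value, of equations whose
right-hand sides have the same derivatives up to order `r` at that value, have the same derivatives
up to order `r + 1`. The Taylor polynomial of order `r` of `f` has the same derivatives as `f` up to
order `r` at its center.
-/

section NormedSpace

variable {𝕜 E F : Type*} [NontriviallyNormedField 𝕜]
  [NormedAddCommGroup E] [NormedSpace 𝕜 E] [NormedAddCommGroup F] [NormedSpace 𝕜 F]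

theorem iteratedDerivWithin_succ_eq_of_hasDerivWithinAt {u v : 𝕜 → E} {s : Set 𝕜} {x : 𝕜}
    (hs : UniqueDiffOn 𝕜 s) (hu : ∀ z ∈ s, HasDerivWithinAt u (v z) s z) (hx : x ∈ s) (n : ℕ) :
    iteratedDerivWithin (n + 1) u s x = iteratedDerivWithin n v s x := by
  rw [iteratedDerivWithin_succ']
  exact iteratedDerivWithin_congr (fun z hz => (hu z hz).derivWithin (hs z hz)) hx

theorem contDiffOn_succ_of_hasDerivWithinAt_comp {f : E → E} {D : Set E} {u : 𝕜 → E} {s : Set 𝕜}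
    {n : ℕ} (hf : ContDiffOn 𝕜 n f D) (hs : UniqueDiffOn 𝕜 s) (huD : MapsTo u s D)
    (hu : ∀ z ∈ s, HasDerivWithinAt u (f (u z)) s z) : ContDiffOn 𝕜 (n + 1) u s := by
  have contDiffOn_succ {m : ℕ} (hfm : ContDiffOn 𝕜 m f D) (hum : ContDiffOn 𝕜 m u s) :
      ContDiffOn 𝕜 (m + 1) u s :=
    (contDiffOn_succ_iff_derivWithin hs).mpr
      ⟨fun z hz => (hu z hz).differentiableWithinAt, by simp,
        (hfm.comp hum huD).congr fun z hz => (hu z hz).derivWithin (hs z hz)⟩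
  induction n with
  | zero =>
    exact contDiffOn_succ hf (contDiffOn_zero.mpr fun z hz => (hu z hz).continuousWithinAt)
  | succ n ih => exact contDiffOn_succ hf (mod_cast ih (hf.of_le (by norm_cast; omega)))

theorem iteratedDerivWithin_comp_eq_of_forall_le {f g : E → F} {D₁ D₂ : Set E} {u v : 𝕜 → E}
    {s₁ s₂ : Set 𝕜} {x₁ x₂ : 𝕜} {n : ℕ}
    (hD₁ : UniqueDiffOn 𝕜 D₁) (hD₂ : UniqueDiffOn 𝕜 D₂)
    (hs₁ : UniqueDiffOn 𝕜 s₁) (hs₂ : UniqueDiffOn 𝕜 s₂)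
    (hf : ContDiffWithinAt 𝕜 n f D₁ (u x₁)) (hg : ContDiffWithinAt 𝕜 n g D₂ (v x₂))
    (hu : ContDiffWithinAt 𝕜 n u s₁ x₁) (hv : ContDiffWithinAt 𝕜 n v s₂ x₂)
    (huD : MapsTo u s₁ D₁) (hvD : MapsTo v s₂ D₂) (hx₁ : x₁ ∈ s₁) (hx₂ : x₂ ∈ s₂)
    (hfg : ∀ k ≤ n, iteratedFDerivWithin 𝕜 k f D₁ (u x₁) = iteratedFDerivWithin 𝕜 k g D₂ (v x₂))
    (huv : ∀ k ≤ n, iteratedDerivWithin k u s₁ x₁ = iteratedDerivWithin k v s₂ x₂) :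
    iteratedDerivWithin n (f ∘ u) s₁ x₁ = iteratedDerivWithin n (g ∘ v) s₂ x₂ := by
  rw [iteratedDerivWithin_vcomp_eq_sum_orderedFinpartition hf hu hD₁ hs₁ hx₁ huD le_rfl,
    iteratedDerivWithin_vcomp_eq_sum_orderedFinpartition hg hv hD₂ hs₂ hx₂ hvD le_rfl]
  refine Finset.sum_congr rfl fun c _ => ?_
  simp only [hfg c.length c.length_le, fun j => huv (c.partSize j) (c.partSize_le j)]

theorem iteratedDerivWithin_eq_of_hasDerivWithinAt_comp {f g : E → E} {D₁ D₂ : Set E} {u v : 𝕜 → E}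
    {s₁ s₂ : Set 𝕜} {x₁ x₂ : 𝕜} {r : ℕ}
    (hD₁ : UniqueDiffOn 𝕜 D₁) (hD₂ : UniqueDiffOn 𝕜 D₂)
    (hs₁ : UniqueDiffOn 𝕜 s₁) (hs₂ : UniqueDiffOn 𝕜 s₂)
    (hf : ContDiffOn 𝕜 r f D₁) (hg : ContDiffOn 𝕜 r g D₂)
    (huD : MapsTo u s₁ D₁) (hvD : MapsTo v s₂ D₂)
    (hu : ∀ z ∈ s₁, HasDerivWithinAt u (f (u z)) s₁ z)
    (hv : ∀ z ∈ s₂, HasDerivWithinAt v (g (v z)) s₂ z)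
    (hx₁ : x₁ ∈ s₁) (hx₂ : x₂ ∈ s₂) (huv : u x₁ = v x₂)
    (hfg : ∀ k ≤ r, iteratedFDerivWithin 𝕜 k f D₁ (u x₁) = iteratedFDerivWithin 𝕜 k g D₂ (v x₂))
    {n : ℕ} (hn : n ≤ r + 1) :
    iteratedDerivWithin n u s₁ x₁ = iteratedDerivWithin n v s₂ x₂ := by
  induction n using Nat.strong_induction_on with
  | _ n ih =>
    obtain _ | n := n
    · simpa only [iteratedDerivWithin_zero] using huv
    have hfn : ContDiffOn 𝕜 n f D₁ := hf.of_le (by norm_cast; omega)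
    have hgn : ContDiffOn 𝕜 n g D₂ := hg.of_le (by norm_cast; omega)
    have hun := (contDiffOn_succ_of_hasDerivWithinAt_comp hfn hs₁ huD hu).of_succ
    have hvn := (contDiffOn_succ_of_hasDerivWithinAt_comp hgn hs₂ hvD hv).of_succ
    rw [iteratedDerivWithin_succ_eq_of_hasDerivWithinAt hs₁ hu hx₁,
      iteratedDerivWithin_succ_eq_of_hasDerivWithinAt hs₂ hv hx₂]
    exact iteratedDerivWithin_comp_eq_of_forall_le hD₁ hD₂ hs₁ hs₂
      (hfn _ (huD hx₁)) (hgn _ (hvD hx₂)) (hun _ hx₁) (hvn _ hx₂) huD hvD hx₁ hx₂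
      (fun k hk => hfg k (by omega)) (fun k hk => ih k (by omega) (by omega))

end NormedSpace

open scoped Pointwise in
theorem iteratedDerivWithin_comp_const_add_Icc {F : Type*} [NormedAddCommGroup F]
    [NormedSpace ℝ F] (f : ℝ → F) (n : ℕ) (c a b x : ℝ) :
    iteratedDerivWithin n (fun z => f (c + z)) (Icc a b) x =
      iteratedDerivWithin n f (Icc (c + a) (c + b)) (c + x) := by
  have vadd_Icc : c +ᵥ Icc a b = Icc (c + a) (c + b) := Set.image_const_add_Icc c a b
  rw [iteratedDerivWithin_comp_const_add, vadd_Icc]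

section Taylor

variable {𝕜 : Type*} [NontriviallyNormedField 𝕜] [CharZero 𝕜]

theorem iteratedDeriv_sum_div_factorial_mul_sub_pow (c : ℕ → 𝕜) (a : 𝕜) {r j : ℕ} (hj : j ≤ r) :
    iteratedDeriv j (fun x => ∑ i ∈ range (r + 1), c i / (Nat.factorial i) * (x - a) ^ i) a =
      c j := by
  have iteratedDeriv_monomial (i : ℕ) :
      iteratedDeriv j (fun x => c i / (Nat.factorial i) * (x - a) ^ i) a =
        if j = i then c i else 0 := by
    rw [iteratedDeriv_const_mul_field, iteratedDeriv_comp_sub_const j (fun x : 𝕜 => x ^ i) a]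
    simp only [sub_self, iteratedDeriv_fun_pow_zero]
    split_ifs with hji
    · rw [← hji]
      exact div_mul_cancel₀ _ (mod_cast j.factorial_ne_zero)
    · simp
  rw [iteratedDeriv_fun_sum fun i _ => by fun_prop]
  simp only [iteratedDeriv_monomial, Finset.sum_ite_eq, Finset.mem_range, Nat.lt_succ_of_le hj,
    if_true]

theorem taylor_method_derivatives_match_general {r : ℕ} {D : Set 𝕜} (hD : UniqueDiffOn 𝕜 D)
    {f : 𝕜 → 𝕜} (hf : ContDiffOn 𝕜 r f D) {s₁ s₂ : Set 𝕜}
    (hs₁ : UniqueDiffOn 𝕜 s₁) (hs₂ : UniqueDiffOn 𝕜 s₂) {y Φ : 𝕜 → 𝕜} (hyD : MapsTo y s₁ D)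
    (hy : ∀ z ∈ s₁, HasDerivWithinAt y (f (y z)) s₁ z)
    {t₁ t₂ : 𝕜} (ht₁ : t₁ ∈ s₁) (ht₂ : t₂ ∈ s₂) (hΦt₂ : Φ t₂ = y t₁)
    (hΦ : ∀ z ∈ s₂, HasDerivWithinAt Φ
      (∑ j ∈ range (r + 1),
        iteratedDerivWithin j f D (y t₁) / (Nat.factorial j) * (Φ z - y t₁) ^ j) s₂ z)
    {n : ℕ} (hn : n ≤ r + 1) :
    iteratedDerivWithin n y s₁ t₁ = iteratedDerivWithin n Φ s₂ t₂ := by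
  let p : 𝕜 → 𝕜 := fun x => ∑ j ∈ range (r + 1),
    iteratedDerivWithin j f D (y t₁) / (Nat.factorial j) * (x - y t₁) ^ j
  have hp : ContDiff 𝕜 r p := by fun_prop
  have hfp (k : ℕ) (hk : k ≤ r) :
      iteratedFDerivWithin 𝕜 k f D (y t₁) = iteratedFDerivWithin 𝕜 k p univ (Φ t₂) := by
    simp only [iteratedFDerivWithin_eq_equiv_comp, Function.comp_apply, iteratedDerivWithin_univ,
      hΦt₂, p, iteratedDeriv_sum_div_factorial_mul_sub_pow _ _ hk]
  exact iteratedDerivWithin_eq_of_hasDerivWithinAt_comp hD uniqueDiffOn_univ hs₁ hs₂ hf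
    hp.contDiffOn hyD (mapsTo_univ Φ s₂) hy hΦ ht₁ ht₂ hΦt₂.symm hfp hn

end Taylor

/-- The value and the first `r+1` derivatives at `h = 0` of the exact solution
`h ↦ y(t+h)` of `y' = f(y)` and of the solution `Φ` of the IVP obtained by replacing `f`
by its `r`-th order Taylor polynomial centered at `y(t)` agree (one-sided derivatives at
the endpoints). -/
theorem taylor_method_derivatives_match
    (r : ℕ) (D : Set ℝ) (hD : IsOpen D)
    (f : ℝ → ℝ) (hf : ContDiffOn ℝ (r + 1) f D)
    (T : ℝ) (hT : 0 < T) (y : ℝ → ℝ)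
    (hyD : ∀ t ∈ Icc (0 : ℝ) T, y t ∈ D)
    (hy : ∀ t ∈ Icc (0 : ℝ) T, HasDerivWithinAt y (f (y t)) (Icc (0 : ℝ) T) t)
    (t : ℝ) (ht : t ∈ Icc (0 : ℝ) T)
    (h₀ : ℝ) (hh₀ : 0 < h₀)
    (Φ : ℝ → ℝ)
    (hΦdiff : ∀ k ≤ r + 1,
      DifferentiableOn ℝ (iteratedDerivWithin k Φ (Icc (0 : ℝ) h₀)) (Icc (0 : ℝ) h₀))
    (hΦ0 : Φ 0 = y t)
    (hΦ : ∀ h ∈ Icc (0 : ℝ) h₀,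
      HasDerivWithinAt Φ
        (∑ j ∈ range (r + 1),
          iteratedDerivWithin j f D (y t) / (Nat.factorial j) * (Φ h - y t) ^ j)
        (Icc (0 : ℝ) h₀) h) :
    ∀ n ≤ r + 1,
      iteratedDerivWithin n (fun h => y (t + h)) (Icc (-t) (T - t)) 0 =
        iteratedDerivWithin n Φ (Icc (0 : ℝ) h₀) 0 := by
  intro n hn
  rw [iteratedDerivWithin_comp_const_add_Icc, add_neg_cancel, add_sub_cancel, add_zero]
  exact taylor_method_derivatives_match_general hD.uniqueDiffOn hf.of_succ (uniqueDiffOn_Icc hT)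
    (uniqueDiffOn_Icc hh₀) hyD hy ht (left_mem_Icc.mpr hh₀.le) hΦ0 hΦ hn
end

section
/- Let r ∈ ℕ₀, let D ⊆ ℝ be open, let f : D → ℝ be (r+1)-times continuously differentiable, let T > 0, and let y : [0,T] → D solve y'(t) = f(y(t)) on [0,T] with y(0) = y₀. Let K ⊆ D be compact with y([0,T]) contained in the interior of K, let h₀ > 0, and let Φ : [0,h₀] × K → ℝ be continuous such that for every y ∈ K: Φ(0,y) = y and ∂Φ/∂h(h,y) = Σ_{j=0}^{r} (f^{(j)}(y)/j!)(Φ(h,y) − y)^j for all h ∈ [0,h₀]; suppose moreover that ∂^{r+2}Φ/∂h^{r+2} exists and is continuous on [0,h₀] × K and that ∂Φ/∂h satisfies a Lipschitz condition with respect to y on [0,h₀] × K. Then Φ is a convergent one-step method of order r+1: there exist N₀ ∈ ℕ and M ≥ 0 such that for every N ≥ N₀, setting h = T/N, the recursion y₀⁽ᴺ⁾ = y₀, y_{n+1}⁽ᴺ⁾ = Φ(h, y_n⁽ᴺ⁾) is well defined with all y_n⁽ᴺ⁾ in the interior of K, and max_{0 ≤ n ≤ N} |y(nh) − y_n⁽ᴺ⁾|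 ≤ M h^{r+1}. -/
/-!
The exact solution `s ↦ y (t + s)` solves the frozen Taylor equation centered at `z = y t` up to a
defect `O(|y (t + s) - z| ^ (r + 1)) = O(s ^ (r + 1))`, while `s ↦ Φ s z` solves it exactly from the
same initial value. Grönwall's inequality therefore bounds the local error by `O(h ^ (r + 2))`.
The Lipschitz condition on `∂Φ/∂h` makes each `Φ h` Lipschitz with constant `1 + h L`, so by the
discrete Grönwall inequality the `N = T / h` local errors add up to `O(h ^ (r + 1))`. For small `h`
this is less than the distance from the trajectory to the complement of `K`, so the iterates
never leave `K`.
-/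

open Finset Set

open scoped NNReal Topology

section Gronwall

lemma gronwallBound_le_mul_exp {δ K ε : ℝ} (hK : 0 ≤ K) (hε : 0 ≤ ε) (x : ℝ) :
    gronwallBound δ K ε x ≤ (δ + ε * x) * Real.exp (K * x) := by
  obtain rfl | hK := hK.eq_or_lt
  · simp [gronwallBound_K0]
  · have exp_sub_one_le : Real.exp (K * x) - 1 ≤ K * x * Real.exp (K * x) := by
      have := mul_le_mul_of_nonneg_right (Real.one_sub_le_exp_neg (K * x)) (Real.exp_nonneg (K * x))
      rw [← Real.exp_add, neg_add_cancel, Real.exp_zero] at this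
      linarith
    rw [gronwallBound_of_K_ne_0 hK.ne']
    calc δ * Real.exp (K * x) + ε / K * (Real.exp (K * x) - 1)
        ≤ δ * Real.exp (K * x) + ε / K * (K * x * Real.exp (K * x)) := by gcongr
      _ = (δ + ε * x) * Real.exp (K * x) := by field_simp

lemma discrete_gronwall_of_forall_lt {u : ℕ → ℝ} {b c : ℝ} {n : ℕ} (hu : ∀ m, 0 ≤ u m)
    (hb : 0 ≤ b) (hc : 0 ≤ c) (hrec : ∀ m < n, u (m + 1) ≤ (1 + c) * u m + b) :
    u n ≤ (u 0 + n * b) * Real.exp (n * c) := by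
  -- Stopping the sequence at index `n` extends the recursion to all indices.
  have hrec_min (m : ℕ) (_ : m ≥ 0) : u (min (m + 1) n) ≤ (1 + c) * u (min m n) + b := by
    rcases lt_or_ge m n with hm | hm
    · simpa only [min_eq_left hm.le, min_eq_left (Nat.succ_le_of_lt hm)] using hrec m hm
    · rw [min_eq_right hm, min_eq_right (hm.trans m.le_succ)]
      nlinarith [mul_nonneg hc (hu n)]
  simpa using discrete_gronwall (u := fun m => u (min m n)) (by simpa using hu 0) hrec_min
    (fun _ _ => hc) (fun _ _ => hb) n.zero_le

variable {E : Type*} [NormedAddCommGroup E] [NormedSpace ℝ E]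

lemma dist_le_mul_exp_of_norm_deriv_sub_le {v : E → E} {W : Set E} {Λ : ℝ≥0} {u u' w : ℝ → E}
    {a b ε : ℝ} (hab : a ≤ b) (hv : LipschitzOnWith Λ v W)
    (hu : ∀ s ∈ Icc a b, HasDerivWithinAt u (u' s) (Icc a b) s) (huW : MapsTo u (Icc a b) W)
    (hdefect : ∀ s ∈ Icc a b, ‖u' s - v (u s)‖ ≤ ε)
    (hw : ∀ s ∈ Icc a b, HasDerivWithinAt w (v (w s)) (Icc a b) s) (hwW : MapsTo w (Icc a b) W)
    (hinit : u a = w a) :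
    dist (u b) (w b) ≤ ε * (b - a) * Real.exp (Λ * (b - a)) := by
  have mem_Icc {s : ℝ} (hs : s ∈ Ico a b) : s ∈ Icc a b := Ico_subset_Icc_self hs
  have Icc_mem {s : ℝ} (hs : s ∈ Ico a b) : Icc a b ∈ 𝓝[≥] s := Icc_mem_nhdsGE_of_mem hs
  have hε : 0 ≤ ε := (norm_nonneg _).trans (hdefect a (left_mem_Icc.2 hab))
  have hgronwall : dist (u b) (w b) ≤ gronwallBound 0 Λ (ε + 0) (b - a) :=
    dist_le_of_approx_trajectories_ODE_of_mem (v := fun _ => v) (s := fun _ => W)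
      (fun _ _ => hv)
      (fun s hs => (hu s hs).continuousWithinAt)
      (fun s hs => (hu s (mem_Icc hs)).mono_of_mem_nhdsWithin (Icc_mem hs))
      (fun s hs => (dist_eq_norm _ _).trans_le (hdefect s (mem_Icc hs)))
      (fun s hs => huW (mem_Icc hs))
      (fun s hs => (hw s hs).continuousWithinAt)
      (fun s hs => (hw s (mem_Icc hs)).mono_of_mem_nhdsWithin (Icc_mem hs))
      (fun s _ => (dist_self _).le)
      (fun s hs => hwW (mem_Icc hs))
      (by simp [hinit]) b (right_mem_Icc.2 hab)
  simpa using hgronwall.trans (gronwallBound_le_mul_exp Λ.coe_nonneg (by simpa using hε) _)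

end Gronwall

section TaylorPolynomial

variable {E : Type*} [NormedAddCommGroup E] [NormedSpace ℝ E] {f : ℝ → E} {n : ℕ}
  {D K S W : Set ℝ}

lemma sum_iteratedDerivWithin_div_factorial_eq_taylorWithinEval (f : ℝ → ℝ) (n : ℕ) (D : Set ℝ)
    (z w : ℝ) :
    ∑ j ∈ range (n + 1), iteratedDerivWithin j f D z / (Nat.factorial j) * (w - z) ^ j =
      taylorWithinEval f n D z w := by
  rw [taylor_within_apply]
  refine Finset.sum_congr rfl fun j _ => ?_
  rw [smul_eq_mul]
  ring

lemma norm_sub_taylorWithinEval_le_s4 (hD : UniqueDiffOn ℝ D) (hSc : Convex ℝ S) (hSD : S ⊆ D)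
    (hf : ContDiffOn ℝ (n + 1) f D) {C : ℝ}
    (hC : ∀ x ∈ S, ‖iteratedDerivWithin (n + 1) f D x‖ ≤ C) {z w : ℝ} (hz : z ∈ S) (hw : w ∈ S) :
    ‖f w - taylorWithinEval f n D z w‖ ≤ C * |w - z| ^ (n + 1) := by
  induction n generalizing f w with
  | zero =>
    have hderiv (x : ℝ) (hx : x ∈ S) : HasDerivWithinAt f (derivWithin f D x) S x :=
      ((hf.differentiableOn (by simp) x (hSD hx)).hasDerivWithinAt).mono hSD
    simpa using hSc.norm_image_sub_le_of_norm_hasDerivWithin_le hderiv (by simpa using hC) hz hw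
  | succ n ih =>
    obtain ⟨hdiff, -, hf'⟩ := (contDiffOn_succ_iff_derivWithin (n := (n + 1 : ℕ)) hD).1 hf
    have hsub : uIcc z w ⊆ S := hSc.ordConnected.uIcc_subset hz hw
    have hderiv (x : ℝ) (hx : x ∈ uIcc z w) :
        HasDerivWithinAt (fun x => f x - taylorWithinEval f (n + 1) D z x)
          (derivWithin f D x - taylorWithinEval (derivWithin f D) n D z x) (uIcc z w) x :=
      ((hdiff x (hSD (hsub hx))).hasDerivWithinAt.mono (hsub.trans hSD)).sub
        (hasDerivAt_taylorWithinEval_succ f n).hasDerivWithinAt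
    have hC_nonneg : 0 ≤ C := (norm_nonneg _).trans (hC z hz)
    have hbound (x : ℝ) (hx : x ∈ uIcc z w) :
        ‖derivWithin f D x - taylorWithinEval (derivWithin f D) n D z x‖
          ≤ C * |w - z| ^ (n + 1) := by
      refine (ih hf' ?_ (hsub hx)).trans ?_
      · simpa only [← iteratedDerivWithin_succ'] using hC
      · have : |x - z| ≤ |w - z| := abs_sub_left_of_mem_uIcc hx
        gcongr
    simpa [pow_succ _ (n + 1), mul_assoc] using
      (convex_uIcc z w).norm_image_sub_le_of_norm_hasDerivWithin_le hderiv hbound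
        left_mem_uIcc right_mem_uIcc

lemma exists_norm_sub_taylorWithinEval_le (hD : UniqueDiffOn ℝ D) (hS : IsCompact S)
    (hSc : Convex ℝ S) (hSD : S ⊆ D) (hf : ContDiffOn ℝ (n + 1) f D) :
    ∃ C : ℝ, 0 ≤ C ∧ ∀ z ∈ S, ∀ w ∈ S,
      ‖f w - taylorWithinEval f n D z w‖ ≤ C * |w - z| ^ (n + 1) := by
  obtain ⟨C, hC⟩ := hS.exists_bound_of_continuousOn
    ((hf.continuousOn_iteratedDerivWithin (m := n + 1) (by simp) hD).mono hSD)
  exact ⟨|C|, abs_nonneg C, fun z hz w hw => norm_sub_taylorWithinEval_le_s4 hD hSc hSD hf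
    (fun x hx => (hC x hx).trans (le_abs_self C)) hz hw⟩

lemma continuousOn_uncurry_taylorWithinEval (hD : UniqueDiffOn ℝ D) (hf : ContDiffOn ℝ n f D) :
    ContinuousOn (fun p : ℝ × ℝ => taylorWithinEval f n D p.1 p.2) (D ×ˢ univ) := by
  simp only [taylor_within_apply]
  refine continuousOn_finsetSum _ fun j hj => ContinuousOn.smul (by fun_prop) ?_
  have hjn : (j : WithTop ℕ∞) ≤ n := by exact_mod_cast Finset.mem_range_succ_iff.1 hj
  exact (hf.continuousOn_iteratedDerivWithin hjn hD).comp continuousOn_fst fun p hp => hp.1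

lemma exists_lipschitzOnWith_taylorWithinEval (hD : UniqueDiffOn ℝ D) (hK : IsCompact K)
    (hKD : K ⊆ D) (hW : IsCompact W) (hWc : Convex ℝ W) (hf : ContDiffOn ℝ n f D) :
    ∃ Λ : ℝ≥0, ∀ z ∈ K, LipschitzOnWith Λ (taylorWithinEval f n D z) W := by
  cases n with
  | zero => exact ⟨0, fun z _ => by simp⟩
  | succ n =>
    have hf' : ContDiffOn ℝ n (derivWithin f D) D := hf.derivWithin hD (by simp)
    obtain ⟨B, hB⟩ := (hK.prod hW).exists_bound_of_continuousOn
      ((continuousOn_uncurry_taylorWithinEval hD hf').mono (prod_mono hKD (subset_univ W)))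
    exact ⟨B.toNNReal, fun z hz => hWc.lipschitzOnWith_of_nnnorm_hasDerivWithin_le
      (fun w _ => (hasDerivAt_taylorWithinEval_succ f n).hasDerivWithinAt)
      fun w hw => NNReal.le_toNNReal_of_coe_le (hB (z, w) ⟨hz, hw⟩)⟩

end TaylorPolynomial

/-- A one-step method: `Φ h z` is the approximation, after a step of size `h`, to the solution
that starts at `z`. -/
abbrev OneStepMethod (X : Type*) := ℝ → X → X

namespace OneStepMethod

section Convergence

variable {X : Type*} [PseudoMetricSpace X] {Φ : OneStepMethod X} {y : ℝ → X} {T h₀ A L : ℝ}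
  {p : ℕ} {U : Set X}

/-- Consistency of order `p` along the trajectory `y` on `[0, T]` for step sizes up to `h₀`: the
local error, made by a single step that starts on the trajectory, is `O(h ^ (p + 1))`. -/
def IsConsistentOfOrder (Φ : OneStepMethod X) (y : ℝ → X) (T h₀ : ℝ) (p : ℕ) : Prop :=
  ∃ A : ℝ, 0 ≤ A ∧ ∀ t h : ℝ, 0 ≤ t → h ∈ Icc 0 h₀ → t + h ≤ T →
    dist (y (t + h)) (Φ h (y t)) ≤ A * h ^ (p + 1)

/-- Stability on `U` for step sizes up to `h₀`: a single step of size `h` expands distances at most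
by the factor `1 + h L`. -/
def IsStable (Φ : OneStepMethod X) (U : Set X) (h₀ : ℝ) : Prop :=
  ∃ L : ℝ, 0 ≤ L ∧ ∀ h ∈ Icc 0 h₀, ∀ z ∈ U, ∀ z' ∈ U,
    dist (Φ h z) (Φ h z') ≤ (1 + h * L) * dist z z'

/-- Convergence of order `p` to the trajectory `y` on `[0, T]` inside `U`: if `N` is large, every
sequence that starts at `y 0` and makes `N` steps of size `T / N` stays in `U` and in distance
`O((T / N) ^ p)` of the trajectory. -/
def IsConvergentOfOrder (Φ : OneStepMethod X) (y : ℝ → X) (T : ℝ) (U : Set X) (p : ℕ) : Prop :=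
  ∃ N₀ : ℕ, 0 < N₀ ∧ ∃ M : ℝ, 0 ≤ M ∧ ∀ N : ℕ, N₀ ≤ N →
    ∀ seq : ℕ → X, seq 0 = y 0 → (∀ n < N, seq (n + 1) = Φ (T / N) (seq n)) →
      ∀ n ≤ N, seq n ∈ U ∧ dist (y (n * (T / N))) (seq n) ≤ M * (T / N) ^ p

lemma IsStable.mono {V : Set X} (hΦ : Φ.IsStable V h₀) (hUV : U ⊆ V) : Φ.IsStable U h₀ :=
  let ⟨L, hL, hΦL⟩ := hΦ
  ⟨L, hL, fun h hh z hz z' hz' => hΦL h hh z (hUV hz) z' (hUV hz')⟩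

lemma dist_le_of_forall_lt_mem {h : ℝ} {seq : ℕ → X} {n : ℕ} (hA : 0 ≤ A) (hL : 0 ≤ L)
    (hh : 0 ≤ h)
    (hlocal : ∀ t, 0 ≤ t → t + h ≤ T → dist (y (t + h)) (Φ h (y t)) ≤ A * h ^ (p + 1))
    (hstable : ∀ z ∈ U, ∀ z' ∈ U, dist (Φ h z) (Φ h z') ≤ (1 + h * L) * dist z z')
    (hy : MapsTo y (Icc 0 T) U) (hnT : n * h ≤ T) (hseq_zero : seq 0 = y 0)
    (hseq : ∀ m < n, seq (m + 1) = Φ h (seq m)) (hseqU : ∀ m < n, seq m ∈ U) :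
    dist (y (n * h)) (seq n) ≤ A * T * Real.exp (L * T) * h ^ p := by
  have hrec (m : ℕ) (hm : m < n) : dist (y ((m + 1 : ℕ) * h)) (seq (m + 1)) ≤
      (1 + h * L) * dist (y (m * h)) (seq m) + A * h ^ (p + 1) := by
    have hnext : ((m + 1 : ℕ) : ℝ) * h = m * h + h := by push_cast; ring
    have hmT : m * h + h ≤ T := by
      rw [← hnext]
      exact (mul_le_mul_of_nonneg_right (by exact_mod_cast hm) hh).trans hnT
    have hmh : 0 ≤ m * h := by positivity
    rw [hnext, hseq m hm, add_comm ((1 + h * L) * _)]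
    exact (dist_triangle _ (Φ h (y (m * h))) _).trans <| add_le_add (hlocal _ hmh hmT) <|
      hstable _ (hy ⟨hmh, by linarith⟩) _ (hseqU m hm)
  have hT : 0 ≤ T := (mul_nonneg n.cast_nonneg hh).trans hnT
  calc dist (y (n * h)) (seq n)
      ≤ (dist (y ((0 : ℕ) * h)) (seq 0) + n * (A * h ^ (p + 1))) * Real.exp (n * (h * L)) :=
        discrete_gronwall_of_forall_lt (u := fun m => dist (y (m * h)) (seq m))
          (fun _ => dist_nonneg) (by positivity) (by positivity) hrec
    _ = A * (n * h) * Real.exp (L * (n * h)) * h ^ p := by simp [hseq_zero]; ring_nf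
    _ ≤ A * T * Real.exp (L * T) * h ^ p := by gcongr

theorem IsConsistentOfOrder.isConvergentOfOrder (hΦc : Φ.IsConsistentOfOrder y T h₀ p)
    (hΦs : Φ.IsStable U h₀) (hp : p ≠ 0) (hT : 0 ≤ T) (hh₀ : 0 < h₀) (hU : IsOpen U)
    (hy : ContinuousOn y (Icc 0 T)) (hyU : MapsTo y (Icc 0 T) U) :
    Φ.IsConvergentOfOrder y T U p := by
  obtain ⟨A, hA, hlocal⟩ := hΦc
  obtain ⟨L, hL, hstable⟩ := hΦs
  obtain ⟨δ, hδ, hthick⟩ := (isCompact_Icc.image_of_continuousOn hy).exists_thickening_subset_open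
    hU hyU.image_subset
  set M := A * T * Real.exp (L * T)
  have hstep : Filter.Tendsto (fun N : ℕ => T / (N : ℝ)) Filter.atTop (𝓝 0) :=
    tendsto_const_div_atTop_nhds_zero_nat T
  have herror : Filter.Tendsto (fun N : ℕ => M * (T / (N : ℝ)) ^ p) Filter.atTop (𝓝 0) := by
    simpa [hp] using (hstep.pow p).const_mul M
  obtain ⟨N₁, hN₁⟩ := Filter.eventually_atTop.1
    ((hstep.eventually_lt_const hh₀).and (herror.eventually_lt_const hδ))
  refine ⟨N₁ + 1, N₁.succ_pos, M, by positivity, fun N hN seq hseq_zero hseq n hn => ?_⟩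
  obtain ⟨hNh₀, hNδ⟩ := hN₁ N (N₁.le_succ.trans hN)
  have hNpos : (0 : ℝ) < N := by exact_mod_cast N₁.succ_pos.trans_le hN
  set h := T / (N : ℝ)
  have hh : 0 ≤ h := by positivity
  induction n using Nat.strong_induction_on with
  | _ n ih =>
    have hnT : n * h ≤ T := by
      calc n * h ≤ N * h := by gcongr
        _ = T := mul_div_cancel₀ T hNpos.ne'
    have hdist : dist (y (n * h)) (seq n) ≤ M * h ^ p :=
      dist_le_of_forall_lt_mem hA hL hh (fun t ht => hlocal t h ht ⟨hh, hNh₀.le⟩)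
        (hstable h ⟨hh, hNh₀.le⟩) hyU hnT hseq_zero (fun m hm => hseq m (hm.trans_le hn))
        (fun m hm => (ih m hm (hm.le.trans hn)).1)
    refine ⟨hthick (Metric.mem_thickening_iff.2 ⟨y (n * h), ?_, ?_⟩), hdist⟩
    · exact mem_image_of_mem y ⟨by positivity, hnT⟩
    · rw [dist_comm]
      exact hdist.trans_lt hNδ

end Convergence

section FrozenFlow

variable {E : Type*} [NormedAddCommGroup E] [NormedSpace ℝ E] {Φ : OneStepMethod E}
  {V : E → E → E} {K : Set E} {h₀ : ℝ}

/-- The method that replaces the vector field by `V z`, where `z` is the current value, and solves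
the resulting equation exactly: for `z ∈ K`, the curve `h ↦ Φ h z` is a solution of `w' = V z w` on
`[0, h₀]` with initial value `z`. -/
structure IsFrozenFlow (Φ : OneStepMethod E) (V : E → E → E) (K : Set E) (h₀ : ℝ) : Prop where
  zero : ∀ z ∈ K, Φ 0 z = z
  hasDerivWithinAt : ∀ z ∈ K, ∀ h ∈ Icc 0 h₀,
    HasDerivWithinAt (fun s => Φ s z) (V z (Φ h z)) (Icc 0 h₀) h

namespace IsFrozenFlow

lemma isStable {L : ℝ≥0} (hΦ : Φ.IsFrozenFlow V K h₀)
    (hL : ∀ h ∈ Icc 0 h₀, LipschitzOnWith L (fun z => V z (Φ h z)) K) : Φ.IsStable K h₀ := by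
  refine ⟨L, L.coe_nonneg, fun h hh z hz z' hz' => ?_⟩
  have hzero : (0 : ℝ) ∈ Icc 0 h₀ := left_mem_Icc.2 (hh.1.trans hh.2)
  have hdiff : ‖(Φ h z - Φ h z') - (z - z')‖ ≤ L * dist z z' * h := by
    simpa [hΦ.zero z hz, hΦ.zero z' hz', abs_of_nonneg hh.1] using
      (convex_Icc 0 h₀).norm_image_sub_le_of_norm_hasDerivWithin_le
        (fun s hs => (hΦ.hasDerivWithinAt z hz s hs).fun_sub (hΦ.hasDerivWithinAt z' hz' s hs))
        (fun s hs => (dist_eq_norm _ _).symm.trans_le ((hL s hs).dist_le_mul z hz z' hz'))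
        hzero hh
  calc dist (Φ h z) (Φ h z') = ‖((Φ h z - Φ h z') - (z - z')) + (z - z')‖ := by
        rw [sub_add_cancel, dist_eq_norm]
    _ ≤ L * dist z z' * h + dist z z' := by
        rw [dist_eq_norm z z']
        exact (norm_add_le _ _).trans (by simpa [dist_eq_norm] using hdiff)
    _ = (1 + h * L) * dist z z' := by ring

variable {f : E → E} {y : ℝ → E} {T B C : ℝ} {Λ : ℝ≥0} {W : Set E} {p : ℕ}

lemma dist_solution_le {t h : ℝ} (hΦ : Φ.IsFrozenFlow V K h₀)
    (hΦW : ∀ h ∈ Icc 0 h₀, ∀ z ∈ K, Φ h z ∈ W)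
    (hy : ∀ t ∈ Icc 0 T, HasDerivWithinAt y (f (y t)) (Icc 0 T) t)
    (hyK : MapsTo y (Icc 0 T) K) (hyW : MapsTo y (Icc 0 T) W)
    (hB : ∀ t ∈ Icc 0 T, ‖f (y t)‖ ≤ B) (hV : ∀ z ∈ K, LipschitzOnWith Λ (V z) W)
    (hC : 0 ≤ C)
    (hVf : ∀ t ∈ Icc 0 T, ∀ s ∈ Icc 0 T, ‖f (y s) - V (y t) (y s)‖ ≤ C * ‖y s - y t‖ ^ p)
    (ht : 0 ≤ t) (hh : h ∈ Icc 0 h₀) (hth : t + h ≤ T) :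
    dist (y (t + h)) (Φ h (y t)) ≤ C * B ^ p * Real.exp (Λ * h₀) * h ^ (p + 1) := by
  have htT : t ∈ Icc 0 T := ⟨ht, by linarith [hh.1]⟩
  have hB_nonneg : 0 ≤ B := (norm_nonneg _).trans (hB t htT)
  have hmaps : MapsTo (t + ·) (Icc 0 h) (Icc 0 T) := fun s hs =>
    ⟨add_nonneg ht hs.1, (add_le_add_right hs.2 t).trans hth⟩
  have hsub : Icc 0 h ⊆ Icc 0 h₀ := Icc_subset_Icc_right hh.2
  have hy_shift (s : ℝ) (hs : s ∈ Icc 0 h) :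
      HasDerivWithinAt (fun s => y (t + s)) (f (y (t + s))) (Icc 0 h) s := by
    simpa [Function.comp_def] using (hy (t + s) (hmaps hs)).scomp s
      ((hasDerivAt_id s).const_add t).hasDerivWithinAt hmaps
  have hgrowth (s : ℝ) (hs : s ∈ Icc 0 h) : ‖y (t + s) - y t‖ ≤ B * h := by
    refine le_trans ?_ (mul_le_mul_of_nonneg_left hs.2 hB_nonneg)
    simpa [abs_of_nonneg hs.1] using
      (convex_Icc 0 h).norm_image_sub_le_of_norm_hasDerivWithin_le hy_shift
        (fun s hs => hB _ (hmaps hs)) (left_mem_Icc.2 hh.1) hs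
  have hdefect (s : ℝ) (hs : s ∈ Icc 0 h) :
      ‖f (y (t + s)) - V (y t) (y (t + s))‖ ≤ C * (B * h) ^ p := by
    refine (hVf t htT _ (hmaps hs)).trans ?_
    have := hgrowth s hs
    gcongr
  calc dist (y (t + h)) (Φ h (y t))
      ≤ C * (B * h) ^ p * (h - 0) * Real.exp (Λ * (h - 0)) :=
        dist_le_mul_exp_of_norm_deriv_sub_le (u := fun s => y (t + s)) (w := fun s => Φ s (y t))
          hh.1 (hV _ (hyK htT)) hy_shift (hyW.comp hmaps) hdefect
          (fun s hs => (hΦ.hasDerivWithinAt _ (hyK htT) s (hsub hs)).mono hsub)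
          (fun s hs => hΦW s (hsub hs) _ (hyK htT)) (by simp [hΦ.zero _ (hyK htT)])
    _ ≤ C * (B * h) ^ p * h * Real.exp (Λ * h₀) := by
        have := hh.1
        have := hh.2
        rw [sub_zero]
        gcongr
    _ = C * B ^ p * Real.exp (Λ * h₀) * h ^ (p + 1) := by ring

end IsFrozenFlow

end FrozenFlow

lemma IsFrozenFlow.isConsistentOfOrder_taylor {f : ℝ → ℝ} {D K : Set ℝ} {r : ℕ} {y : ℝ → ℝ}
    {T h₀ : ℝ} {Φ : OneStepMethod ℝ} (hΦ : Φ.IsFrozenFlow (taylorWithinEval f r D) K h₀)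
    (hΦcont : ContinuousOn (fun q : ℝ × ℝ => Φ q.1 q.2) (Icc 0 h₀ ×ˢ K))
    (hD : UniqueDiffOn ℝ D) (hf : ContDiffOn ℝ (r + 1) f D)
    (hy : ∀ t ∈ Icc 0 T, HasDerivWithinAt y (f (y t)) (Icc 0 T) t)
    (hK : IsCompact K) (hKD : K ⊆ D) (hyK : MapsTo y (Icc 0 T) K) :
    Φ.IsConsistentOfOrder y T h₀ (r + 1) := by
  have hycont : ContinuousOn y (Icc 0 T) := fun t ht => (hy t ht).continuousWithinAt
  have himage_compact : IsCompact (y '' Icc 0 T) := isCompact_Icc.image_of_continuousOn hycont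
  have himage_convex : Convex ℝ (y '' Icc 0 T) :=
    (isPreconnected_Icc.image y hycont).ordConnected.convex
  have himage_subset : y '' Icc 0 T ⊆ D := hyK.image_subset.trans hKD
  obtain ⟨C, hC_nonneg, hC⟩ := exists_norm_sub_taylorWithinEval_le hD himage_compact himage_convex
    himage_subset hf
  obtain ⟨B, hB⟩ := himage_compact.exists_bound_of_continuousOn
    (hf.continuousOn.mono himage_subset)
  obtain ⟨R, hR⟩ := (((isCompact_Icc.prod hK).image_of_continuousOn hΦcont).union
    hK).isBounded.subset_closedBall 0
  obtain ⟨Λ, hΛ⟩ := exists_lipschitzOnWith_taylorWithinEval hD hK hKD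
    (isCompact_closedBall 0 R) (convex_closedBall 0 R) (hf.of_le le_self_add)
  refine ⟨C * |B| ^ (r + 1) * Real.exp (Λ * h₀), by positivity, fun t h ht hh hth => ?_⟩
  exact hΦ.dist_solution_le
    (fun h hh z hz => hR (.inl (mem_image_of_mem _ (mk_mem_prod hh hz)))) hy hyK
    (fun t ht => hR (.inr (hyK ht)))
    (fun t ht => (hB _ (mem_image_of_mem y ht)).trans (le_abs_self B)) hΛ hC_nonneg
    (fun t ht s hs => hC _ (mem_image_of_mem y ht) _ (mem_image_of_mem y hs)) ht hh hth

end OneStepMethod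

theorem taylor_method_convergent_order_general {f : ℝ → ℝ} {D K : Set ℝ} {r : ℕ} {y : ℝ → ℝ}
    {T h₀ : ℝ} {Φ : OneStepMethod ℝ} {L : ℝ≥0} (hD : UniqueDiffOn ℝ D)
    (hf : ContDiffOn ℝ (r + 1) f D) (hT : 0 ≤ T)
    (hy : ∀ t ∈ Icc 0 T, HasDerivWithinAt y (f (y t)) (Icc 0 T) t)
    (hK : IsCompact K) (hKD : K ⊆ D) (hyK : MapsTo y (Icc 0 T) (interior K)) (hh₀ : 0 < h₀)
    (hΦcont : ContinuousOn (fun q : ℝ × ℝ => Φ q.1 q.2) (Icc 0 h₀ ×ˢ K))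
    (hΦ : Φ.IsFrozenFlow (taylorWithinEval f r D) K h₀)
    (hL : ∀ h ∈ Icc 0 h₀, LipschitzOnWith L (fun z => taylorWithinEval f r D z (Φ h z)) K) :
    Φ.IsConvergentOfOrder y T (interior K) (r + 1) := by
  have hconsistent : Φ.IsConsistentOfOrder y T h₀ (r + 1) :=
    hΦ.isConsistentOfOrder_taylor hΦcont hD hf hy hK hKD (hyK.mono_right interior_subset)
  have hstable : Φ.IsStable (interior K) h₀ := (hΦ.isStable hL).mono interior_subset
  exact hconsistent.isConvergentOfOrder hstable r.succ_ne_zero hT hh₀ isOpen_interior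
    (fun t ht => (hy t ht).continuousWithinAt) hyK

/-- The one-step method obtained by adaptively replacing `f` in `y' = f(y)` by its `r`-th
order Taylor polynomial centered at the current value and solving the resulting equation
exactly is a convergent method of order `r+1`. -/
theorem taylor_method_convergent_order
    (r : ℕ) (D : Set ℝ) (hD : IsOpen D)
    (f : ℝ → ℝ) (hf : ContDiffOn ℝ (r + 1) f D)
    (T : ℝ) (hT : 0 < T)
    (y : ℝ → ℝ) (y₀ : ℝ)
    (hyD : ∀ t ∈ Icc (0 : ℝ) T, y t ∈ D)
    (hy : ∀ t ∈ Icc (0 : ℝ) T, HasDerivWithinAt y (f (y t)) (Icc (0 : ℝ) T) t)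
    (hy0 : y 0 = y₀)
    (K : Set ℝ) (hK : IsCompact K) (hKD : K ⊆ D)
    (hyK : y '' Icc (0 : ℝ) T ⊆ interior K)
    (h₀ : ℝ) (hh₀ : 0 < h₀)
    (Φ : ℝ → ℝ → ℝ)
    (hΦcont : ContinuousOn (fun q : ℝ × ℝ => Φ q.1 q.2) (Icc (0 : ℝ) h₀ ×ˢ K))
    (hΦ0 : ∀ z ∈ K, Φ 0 z = z)
    (hΦode : ∀ z ∈ K, ∀ h ∈ Icc (0 : ℝ) h₀,
      HasDerivWithinAt (fun s => Φ s z)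
        (∑ j ∈ range (r + 1),
          iteratedDerivWithin j f D z / (Nat.factorial j) * (Φ h z - z) ^ j)
        (Icc (0 : ℝ) h₀) h)
    (hΦsmooth : ∀ z ∈ K, ContDiffOn ℝ (r + 2) (fun s => Φ s z) (Icc (0 : ℝ) h₀))
    (hΦcont2 : ContinuousOn
      (fun p : ℝ × ℝ =>
        iteratedDerivWithin (r + 2) (fun s => Φ s p.2) (Icc (0 : ℝ) h₀) p.1)
      (Icc (0 : ℝ) h₀ ×ˢ K))
    -- Lipschitz condition for ∂Φ/∂h with respect to the base point
    (L : ℝ) (hL : 0 < L)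
    (hLip : ∀ h ∈ Icc (0 : ℝ) h₀, ∀ z ∈ K, ∀ z' ∈ K,
      |(∑ j ∈ range (r + 1),
          iteratedDerivWithin j f D z / (Nat.factorial j) * (Φ h z - z) ^ j) -
        (∑ j ∈ range (r + 1),
          iteratedDerivWithin j f D z' / (Nat.factorial j) * (Φ h z' - z') ^ j)| ≤
        L * |z - z'|) :
    ∃ N₀ : ℕ, 0 < N₀ ∧ ∃ M : ℝ, 0 ≤ M ∧ ∀ N : ℕ, N₀ ≤ N →
      ∀ seq : ℕ → ℝ, seq 0 = y₀ → (∀ n < N, seq (n + 1) = Φ (T / N) (seq n)) →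
        ∀ n ≤ N, seq n ∈ interior K ∧
          |y (n * (T / N)) - seq n| ≤ M * (T / N) ^ (r + 1) := by
  subst hy0
  simp only [sum_iteratedDerivWithin_div_factorial_eq_taylorWithinEval] at hΦode hLip
  exact taylor_method_convergent_order_general hD.uniqueDiffOn hf hT.le hy hK hKD
    (mapsTo_iff_image_subset.2 hyK) hh₀ hΦcont ⟨hΦ0, hΦode⟩ (L := ⟨L, hL.le⟩)
    fun h hh => LipschitzOnWith.of_dist_le_mul (hLip h hh)
end

section
/- Define φ₁ : ℝ → ℝ by φ₁(z) = (e^z − 1)/z for z ≠ 0 and φ₁(0) = 1. Let f : ℝ → ℝ be differentiable at a point y ∈ ℝ, and define Φ(h) = y + h·φ₁(f'(y)·h)·f(y) for h ∈ ℝ. Then Φ(0) = y and Φ is differentiable with Φ'(h) = f(y) + f'(y)·(Φ(h) − y) for all h ∈ ℝ; that is, the Rosenbrock–Euler method is given by exactly solving the linearization of y' = f(y) at y. -/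
noncomputable def phi1 (z : ℝ) : ℝ := if z = 0 then 1 else (Real.exp z - 1) / z

/- The function `t ↦ t φ₁(a t)` is the primitive of `t ↦ exp (a t)` vanishing at `0`, for `a = 0`
as well; and the identity `z φ₁(z) = exp z - 1` turns `exp (a t)` into `1 + a (t φ₁(a t))`, so that
this primitive solves the linear equation `u' = 1 + a u`. -/

lemma phi1_zero : phi1 0 = 1 := if_pos rfl

lemma mul_phi1 (z : ℝ) : z * phi1 z = Real.exp z - 1 := by
  rcases eq_or_ne z 0 with rfl | hz
  · rw [zero_mul, Real.exp_zero, sub_self]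
  · rw [phi1, if_neg hz, mul_div_cancel₀ _ hz]

lemma mul_phi1_mul_eq_div {a : ℝ} (ha : a ≠ 0) (t : ℝ) :
    t * phi1 (a * t) = (Real.exp (a * t) - 1) / a := by
  rw [eq_div_iff ha, ← mul_phi1]
  ring

lemma hasDerivAt_mul_phi1_mul (a t : ℝ) :
    HasDerivAt (fun s => s * phi1 (a * s)) (Real.exp (a * t)) t := by
  rcases eq_or_ne a 0 with rfl | ha
  · simpa only [zero_mul, phi1_zero, mul_one, Real.exp_zero] using hasDerivAt_id' t
  · simp only [mul_phi1_mul_eq_div ha]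
    have h_exp : HasDerivAt (fun s => Real.exp (a * s)) (Real.exp (a * t) * a) t :=
      (hasDerivAt_const_mul a).exp
    simpa only [mul_div_cancel_right₀ _ ha] using (h_exp.sub_const 1).div_const a

/-- The Rosenbrock–Euler method is given by exactly solving the linearization
of `y' = f(y)` at `y`. -/
theorem rosenbrock_euler_solves_linearization
    (f : ℝ → ℝ) (y : ℝ) (hf : DifferentiableAt ℝ f y)
    (Φ : ℝ → ℝ) (hΦ : Φ = fun h => y + h * phi1 (deriv f y * h) * f y) :
    Φ 0 = y ∧ ∀ h : ℝ, HasDerivAt Φ (f y + deriv f y * (Φ h - y)) h := by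
  subst hΦ
  refine ⟨by simp only [zero_mul, add_zero], fun h => ?_⟩
  have h_deriv : HasDerivAt (fun h => y + h * phi1 (deriv f y * h) * f y)
      (Real.exp (deriv f y * h) * f y) h :=
    ((hasDerivAt_mul_phi1_mul (deriv f y) h).mul_const (f y)).const_add y
  have h_exp : Real.exp (deriv f y * h) = 1 + deriv f y * (h * phi1 (deriv f y * h)) := by
    linear_combination -mul_phi1 (deriv f y * h)
  refine h_deriv.congr_deriv ?_
  rw [h_exp]
  ring
end

section
/- Let a, b, c ∈ ℝ with Δ := b² − 4ac > 0, and define D(t) = √Δ · cosh(√Δ·t/2) − b · sinh(√Δ·t/2) and w(t) = 2c · sinh(√Δ·t/2) / D(t). Then w(0) = 0, and at every t ∈ ℝ with D(t) ≠ 0 the function w is differentiable and satisfies w'(t) = a·w(t)² + b·w(t) + c. In other words, w is the solution of the autonomous Riccati initial value problem ẇ = aw² + bw + c, w(0) = 0, in the case of positive discriminant. -/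
/-!
A Riccati equation is the projective form of a planar linear system: if `u' = p u + c v` and
`v' = q v - a u`, then `w = u / v` satisfies `w' = a w² + (p - q) w + c`. For the trace-free system
`p = b / 2 = -q` the square of the coefficient matrix is the scalar `Δ / 4`, so it is solved by
`u = c S`, `v = C - (b / 2) S` for any `S`, `C` with `S' = C` and `C' = (Δ / 4) S`. When `Δ > 0` one
takes `S = 2 sinh (√Δ t / 2)` and `C = √Δ cosh (√Δ t / 2)`.
-/

section LinearSystem

variable {𝕜 : Type*} [NontriviallyNormedField 𝕜] {t : 𝕜}

lemma hasDerivAt_div_of_linear_system {u v : 𝕜 → 𝕜} {p q a c : 𝕜}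
    (hu : HasDerivAt u (p * u t + c * v t) t) (hv : HasDerivAt v (q * v t - a * u t) t)
    (hvt : v t ≠ 0) :
    HasDerivAt (fun x => u x / v x) (a * (u t / v t) ^ 2 + (p - q) * (u t / v t) + c) t :=
  (hu.fun_div hv hvt).congr_deriv (by field_simp; ring)

lemma hasDerivAt_riccati_of_discrim [NeZero (2 : 𝕜)] {S C : 𝕜 → 𝕜} {a b c : 𝕜}
    (hS : HasDerivAt S (C t) t) (hC : HasDerivAt C (discrim a b c / 4 * S t) t)
    (hv : C t - b / 2 * S t ≠ 0) :
    HasDerivAt (fun x => c * S x / (C x - b / 2 * S x))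
      (a * (c * S t / (C t - b / 2 * S t)) ^ 2 + b * (c * S t / (C t - b / 2 * S t)) + c) t := by
  have h_num : HasDerivAt (fun x => c * S x)
      (b / 2 * (c * S t) + c * (C t - b / 2 * S t)) t :=
    (hS.const_mul c).congr_deriv (by ring)
  have h_den : HasDerivAt (fun x => C x - b / 2 * S x)
      (-(b / 2) * (C t - b / 2 * S t) - a * (c * S t)) t := by
    have four_eq : (4 : 𝕜) = 2 * 2 := by norm_num
    refine (hC.fun_sub (hS.const_mul (b / 2))).congr_deriv ?_
    rw [discrim, four_eq]
    field_simp
    ring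
  simpa only [sub_neg_eq_add, add_halves] using
    hasDerivAt_div_of_linear_system (u := fun x => c * S x) (v := fun x => C x - b / 2 * S x)
      h_num h_den hv

end LinearSystem

section Hyperbolic

variable (s t : ℝ)

lemma hasDerivAt_two_mul_sinh_mul_div_two :
    HasDerivAt (fun x => 2 * Real.sinh (s * x / 2)) (s * Real.cosh (s * t / 2)) t :=
  ((((hasDerivAt_id' t).const_mul s).div_const 2).sinh.const_mul 2).congr_deriv (by ring)

lemma hasDerivAt_mul_cosh_mul_div_two :
    HasDerivAt (fun x => s * Real.cosh (s * x / 2)) (s ^ 2 / 4 * (2 * Real.sinh (s * t / 2))) t :=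
  ((((hasDerivAt_id' t).const_mul s).div_const 2).cosh.const_mul s).congr_deriv (by ring)

end Hyperbolic

/-- The explicit formula solves the autonomous Riccati IVP `ẇ = aw² + bw + c`, `w(0) = 0`,
in the case of positive discriminant `Δ = b² − 4ac > 0`. -/
theorem riccati_solution_positive_discriminant
    (a b c : ℝ) (hΔ : 0 < b ^ 2 - 4 * a * c)
    (D w : ℝ → ℝ)
    (hD : D = fun t => Real.sqrt (b ^ 2 - 4 * a * c) *
        Real.cosh (Real.sqrt (b ^ 2 - 4 * a * c) * t / 2) -
        b * Real.sinh (Real.sqrt (b ^ 2 - 4 * a * c) * t / 2))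
    (hw : w = fun t => 2 * c * Real.sinh (Real.sqrt (b ^ 2 - 4 * a * c) * t / 2) / D t) :
    w 0 = 0 ∧ ∀ t : ℝ, D t ≠ 0 → HasDerivAt w (a * w t ^ 2 + b * w t + c) t := by
  set s := Real.sqrt (b ^ 2 - 4 * a * c)
  have hs : s ^ 2 = discrim a b c := Real.sq_sqrt hΔ.le
  let S : ℝ → ℝ := fun x => 2 * Real.sinh (s * x / 2)
  let C : ℝ → ℝ := fun x => s * Real.cosh (s * x / 2)
  have hD_eq : D = fun x => C x - b / 2 * S x := by
    rw [hD]; funext x; ring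
  have hw_eq : w = fun x => c * S x / (C x - b / 2 * S x) := by
    rw [hw, hD_eq]; funext x; ring
  refine ⟨by simp [hw], fun t ht => ?_⟩
  have hC : HasDerivAt C (discrim a b c / 4 * S t) t :=
    hs ▸ hasDerivAt_mul_cosh_mul_div_two s t
  rw [hD_eq] at ht
  rw [hw_eq]
  exact hasDerivAt_riccati_of_discrim (hasDerivAt_two_mul_sinh_mul_div_two s t) hC ht
end

section
/- Let b, Δ ∈ ℝ with Δ > 0 and √Δ < b, and define D(t) = √Δ · cosh(√Δ·t/2) − b · sinh(√Δ·t/2) and t_max = (1/√Δ) · ln((b + √Δ)/(b − √Δ)). Then D(t) > 0 for all 0 ≤ t < t_max and D(t_max) = 0. Consequently the maximal solution of the Riccati initial value problem ẇ = aw² + bw + c, w(0) = 0, with b² − 4ac = Δ exists precisely up to time t_max in this case. -/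
/-!
With `s = √Δ` and `θ = artanh (s / b)`, the subtraction formula for `sinh` gives
`s cosh x - b sinh x = √(1 - (s / b) ^ 2) b sinh (θ - x)`, so the denominator is, up to a constant
with the sign of `b`, a single hyperbolic sine. Its only zero is `x = θ`, and at `x = s t / 2` this
reads `t = 2 θ / s`, where `2 θ = log ((b + s) / (b - s))`.
-/

open Set
open Real hiding sign_eq_zero_iff sign_zero

theorem sign_sinh (x : ℝ) : SignType.sign (sinh x) = SignType.sign x := by
  rcases lt_trichotomy x 0 with hneg | rfl | hpos
  · rw [sign_neg hneg, sign_neg (sinh_neg_iff.mpr hneg)]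
  · rw [sinh_zero]
  · rw [sign_pos hpos, sign_pos (sinh_pos_iff.mpr hpos)]

theorem sinh_artanh_sub {y : ℝ} (hy : y ∈ Ioo (-1) 1) (x : ℝ) :
    sinh (artanh y - x) = (y * cosh x - sinh x) / √(1 - y ^ 2) := by
  rw [sinh_sub, sinh_artanh hy, cosh_artanh hy]
  ring

theorem div_mem_Ioo_neg_one_one {K : Type*} [Field K] [LinearOrder K] [IsStrictOrderedRing K]
    {s b : K} (h : |s| < |b|) : s / b ∈ Ioo (-1) 1 := by
  rwa [mem_Ioo, ← abs_lt, abs_div, div_lt_one ((abs_nonneg s).trans_lt h)]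

section AbsLtAbs

variable {s b : ℝ} (h : |s| < |b|)
include h

theorem log_add_div_sub_eq_two_mul_artanh :
    log ((b + s) / (b - s)) = 2 * artanh (s / b) := by
  have hb : b ≠ 0 := abs_pos.mp ((abs_nonneg s).trans_lt h)
  have hratio : (1 + s / b) / (1 - s / b) = (b + s) / (b - s) := by
    rw [one_add_div hb, one_sub_div hb, div_div_div_cancel_right₀ hb]
  rw [artanh_eq_half_log (Ioo_subset_Icc_self (div_mem_Ioo_neg_one_one h)), hratio]
  ring

theorem sqrt_one_sub_div_sq_pos : 0 < √(1 - (s / b) ^ 2) :=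
  sqrt_pos.mpr <| sub_pos.mpr <| (sq_lt_one_iff_abs_lt_one _).mpr <|
    abs_lt.mpr (div_mem_Ioo_neg_one_one h)

theorem mul_cosh_sub_mul_sinh_eq (x : ℝ) :
    s * cosh x - b * sinh x = √(1 - (s / b) ^ 2) * (b * sinh (artanh (s / b) - x)) := by
  have hb : b ≠ 0 := abs_pos.mp ((abs_nonneg s).trans_lt h)
  rw [sinh_artanh_sub (div_mem_Ioo_neg_one_one h), mul_left_comm,
    mul_div_cancel₀ _ (sqrt_one_sub_div_sq_pos h).ne', mul_sub, ← mul_assoc, mul_div_cancel₀ _ hb]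

theorem sign_mul_cosh_sub_mul_sinh (x : ℝ) :
    SignType.sign (s * cosh x - b * sinh x) = SignType.sign (b * (artanh (s / b) - x)) := by
  rw [mul_cosh_sub_mul_sinh_eq h, sign_mul, sign_pos (sqrt_one_sub_div_sq_pos h), one_mul,
    sign_mul, sign_sinh, ← sign_mul]

end AbsLtAbs

theorem riccati_blowup_time_positive_discriminant_general
    (b Δ : ℝ) (hΔ : 0 < Δ) (hb : √Δ < |b|)
    (D : ℝ → ℝ) (hD : D = fun t => √Δ * cosh (√Δ * t / 2) - b * sinh (√Δ * t / 2))
    (tmax : ℝ) (htmax : tmax = (1 / √Δ) * log ((b + √Δ) / (b - √Δ))) (t : ℝ) :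
    SignType.sign (D t) = SignType.sign (b * (tmax - t)) := by
  have hs : 0 < √Δ := sqrt_pos.mpr hΔ
  have habs : |√Δ| < |b| := by rwa [abs_of_pos hs]
  have hphase : b * (artanh (√Δ / b) - √Δ * t / 2) = √Δ / 2 * (b * (tmax - t)) := by
    rw [htmax, log_add_div_sub_eq_two_mul_artanh habs]
    field_simp
  rw [hD, sign_mul_cosh_sub_mul_sinh habs, hphase, sign_mul, sign_pos (half_pos hs), one_mul]

/-- If `Δ > 0` and `√Δ < b`, the denominator `D(t) = √Δ cosh(√Δ t/2) − b sinh(√Δ t/2)` is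
positive for `0 ≤ t < t_max` and vanishes at `t_max = (1/√Δ) ln((b+√Δ)/(b−√Δ))`:
the maximal Riccati solution exists precisely up to time `t_max`. -/
theorem riccati_blowup_time_positive_discriminant
    (b Δ : ℝ) (hΔ : 0 < Δ) (hb : Real.sqrt Δ < b)
    (D : ℝ → ℝ)
    (hD : D = fun t => Real.sqrt Δ * Real.cosh (Real.sqrt Δ * t / 2) -
        b * Real.sinh (Real.sqrt Δ * t / 2))
    (tmax : ℝ)
    (htmax : tmax = (1 / Real.sqrt Δ) * Real.log ((b + Real.sqrt Δ) / (b - Real.sqrt Δ))) :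
    (∀ t : ℝ, 0 ≤ t → t < tmax → 0 < D t) ∧ D tmax = 0 := by
  have hsign := riccati_blowup_time_positive_discriminant_general b Δ hΔ
    (hb.trans_le (le_abs_self b)) D hD tmax htmax
  have hbpos : 0 < b := (sqrt_nonneg Δ).trans_lt hb
  refine ⟨fun t _ ht => sign_eq_one_iff.mp ?_, sign_eq_zero_iff.mp ?_⟩
  · rw [hsign, sign_pos (mul_pos hbpos (sub_pos.mpr ht))]
  · rw [hsign, sub_self, mul_zero, sign_zero]
end

section
/- Let b, Δ ∈ ℝ with (b, Δ) ≠ (0, 0), and define t_max ∈ (0, ∞] by: t_max = 2/b if Δ = 0 and b > 0; t_max = (1/√Δ)·ln((b+√Δ)/(b−√Δ)) if Δ > 0 and √Δ < b; t_max = (2/√(−Δ))·arccot(b/√(−Δ)) if Δ < 0 (with arccot : ℝ → (0,π)); and t_max = ∞ otherwise. Then t_max ≥ 2/√(b² + |Δ|). In particular, the maximal solution of the Riccati initial value problem ẇ = aw² + bw + c, w(0) = 0, with Δ = b² − 4ac, is guaranteed to exist on the interval [0, 2/√(b² + |Δ|)). -/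
open Classical

/-- The real inverse cotangent with values in `(0, π)`. -/
noncomputable def arccot (x : ℝ) : ℝ := Real.pi / 2 - Real.arctan x

/-!
Write `s = √|Δ|`. If `Δ < 0`, then `θ = arccot (b / s)` has `sin θ = s / √(b² + s²)`, and the
bound on `t_max = 2θ / s` is `sin θ < θ`. If `0 < Δ` and `s < b`, then `t_max` is twice the
reciprocal of the logarithmic mean of `b + s` and `b - s`, which is less than their arithmetic
mean `b ≤ √(b² + s²)`.
-/

theorem sin_arccot (x : ℝ) : Real.sin (arccot x) = 1 / √(1 + x ^ 2) := by
  rw [arccot, Real.sin_pi_div_two_sub, Real.cos_arctan]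

theorem arccot_pos (x : ℝ) : 0 < arccot x :=
  sub_pos.mpr (Real.arctan_lt_pi_div_two x)

theorem one_div_sqrt_one_add_sq_lt_arccot (x : ℝ) : 1 / √(1 + x ^ 2) < arccot x :=
  sin_arccot x ▸ Real.sin_lt (arccot_pos x)

theorem two_div_sqrt_sq_add_sq_lt_two_div_mul_arccot (b : ℝ) {s : ℝ} (hs : 0 < s) :
    2 / √(b ^ 2 + s ^ 2) < 2 / s * arccot (b / s) := by
  have hsqrt : √(b ^ 2 + s ^ 2) = s * √(1 + (b / s) ^ 2) := by
    rw [show b ^ 2 + s ^ 2 = s ^ 2 * (1 + (b / s) ^ 2) by field_simp; ring,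
      Real.sqrt_mul (sq_nonneg s), Real.sqrt_sq hs.le]
  calc 2 / √(b ^ 2 + s ^ 2) = 2 / s * (1 / √(1 + (b / s) ^ 2)) := by
        rw [hsqrt, div_mul_div_comm, mul_one]
    _ < 2 / s * arccot (b / s) := by
        gcongr
        exact one_div_sqrt_one_add_sq_lt_arccot _

theorem two_mul_sub_div_add_lt_log_div {u v : ℝ} (hv : 0 < v) (hvu : v < u) :
    2 * (u - v) / (u + v) < Real.log (u / v) := by
  have h := Real.lt_log_one_add_of_pos (div_pos (sub_pos.mpr hvu) hv)
  have hlhs : 2 * ((u - v) / v) / ((u - v) / v + 2) = 2 * (u - v) / (u + v) := by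
    have hden : (u - v) / v + 2 = (u + v) / v := by
      field_simp
      ring
    rw [hden, ← mul_div_assoc, div_div_div_cancel_right₀ hv.ne']
  have harg : 1 + (u - v) / v = u / v := by
    rw [sub_div, div_self hv.ne', add_sub_cancel]
  rwa [hlhs, harg] at h

theorem two_div_sqrt_sq_add_sq_lt_one_div_mul_log {b s : ℝ} (hs : 0 < s) (hsb : s < b) :
    2 / √(b ^ 2 + s ^ 2) < 1 / s * Real.log ((b + s) / (b - s)) := by
  have hb : 0 < b := hs.trans hsb
  have hlog := two_mul_sub_div_add_lt_log_div (u := b + s) (sub_pos.mpr hsb) (by linarith)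
  calc 2 / √(b ^ 2 + s ^ 2) ≤ 2 / b := by
        gcongr
        exact Real.le_sqrt_of_sq_le (le_add_of_nonneg_right (sq_nonneg s))
    _ = 1 / s * (2 * (b + s - (b - s)) / (b + s + (b - s))) := by
        rw [add_sub_sub_cancel, add_add_sub_cancel]
        field_simp
    _ < 1 / s * Real.log ((b + s) / (b - s)) := by gcongr

/-- A priori lower bound on the blow-up time of the Riccati IVP `ẇ = aw² + bw + c`,
`w(0) = 0`, with `Δ = b² − 4ac`: in all cases `t_max ≥ 2/√(b² + |Δ|)`. -/
theorem riccati_blowup_time_apriori_bound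
    (b Δ : ℝ) (hbΔ : (b, Δ) ≠ (0, 0))
    (tmax : EReal)
    (htmax : tmax =
      if Δ = 0 ∧ 0 < b then ((2 / b : ℝ) : EReal)
      else if 0 < Δ ∧ Real.sqrt Δ < b then
        (((1 / Real.sqrt Δ) * Real.log ((b + Real.sqrt Δ) / (b - Real.sqrt Δ)) : ℝ) : EReal)
      else if Δ < 0 then (((2 / Real.sqrt (-Δ)) * arccot (b / Real.sqrt (-Δ)) : ℝ) : EReal)
      else (⊤ : EReal)) :
    ((2 / Real.sqrt (b ^ 2 + |Δ|) : ℝ) : EReal) ≤ tmax := by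
  rw [htmax]
  split_ifs with hzero hpos hneg
  · obtain ⟨rfl, hb⟩ := hzero
    rw [abs_zero, add_zero, Real.sqrt_sq hb.le]
  · obtain ⟨hΔ, hb⟩ := hpos
    have h := two_div_sqrt_sq_add_sq_lt_one_div_mul_log (Real.sqrt_pos.mpr hΔ) hb
    rw [Real.sq_sqrt hΔ.le] at h
    rw [abs_of_pos hΔ]
    exact EReal.coe_le_coe h.le
  · have hΔ : 0 < -Δ := neg_pos.mpr hneg
    have h := two_div_sqrt_sq_add_sq_lt_two_div_mul_arccot b (Real.sqrt_pos.mpr hΔ)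
    rw [Real.sq_sqrt hΔ.le] at h
    rw [abs_of_neg hneg]
    exact EReal.coe_le_coe h.le
  · exact le_top
end

section
/- Let a, b, c ∈ ℝ and set Δ = b² − 4ac. Let ε > 0 and let w : [0, ε) → ℝ be differentiable with w(0) = 0 and w'(t) = a·w(t)² + b·w(t) + c for all t ∈ [0, ε). Then, as h → 0⁺, w(h) − [2ch/(2 − bh) − h³·c·Δ/(3(2 − bh)²)] = O(h⁴); that is, the third-case formula Φ(h,y) = y + 2c·h/(2 − b·h) − h³·c·Δ/(3(2 − b·h)²) of the quadratic Taylor method agrees with the exact solution of the quadratic-coefficient initial value problem to third order in the step size h, so the local truncation error of this formula is still O(h⁴). -/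
open Filter Topology Asymptotics

/-!
If `Δ = b² - 4ac = 0` then `2ch/(2 - bh)` solves `ẇ = aw² + bw + c`, `w(0) = 0`; in general it
leaves the defect `cΔh²/(2 - bh)²`. The correction `h³cΔ/(3(2 - bh)²)` is the leading part of the
integral of this defect, so subtracting it leaves a defect `O(h³)`, and Grönwall's inequality turns
a defect `O(hⁿ)` into an error `O(hⁿ⁺¹)`.
-/

section LocalError

open scoped NNReal

theorem gronwallBound_const_mul (r δ K ε x : ℝ) :
    gronwallBound (r * δ) K (r * ε) x = r * gronwallBound δ K ε x := by
  unfold gronwallBound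
  split_ifs <;> ring

theorem isBigO_gronwallBound_zero_sub (K ε t₀ : ℝ) :
    (fun t ↦ gronwallBound 0 K ε (t - t₀)) =O[𝓝 t₀] fun t ↦ t - t₀ := by
  simpa only [sub_self, gronwallBound_x0, sub_zero] using
    (hasDerivAt_gronwallBound_shift 0 K ε t₀ t₀).isBigO_sub

variable {E : Type*} [NormedAddCommGroup E] [NormedSpace ℝ E]
  {v : ℝ → E → E} {s : Set E} {K : ℝ≥0} {f g g' : ℝ → E} {t₀ : ℝ} {n : ℕ}

theorem eventually_dist_le_pow_mul_gronwallBound_of_defect_le {C : ℝ}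
    (hv : ∀ᶠ t in 𝓝[≥] t₀, LipschitzOnWith K (v t) s) (hs : s ∈ 𝓝 (f t₀))
    (hf : ∀ᶠ t in 𝓝[≥] t₀, HasDerivWithinAt f (v t (f t)) (Set.Ici t₀) t)
    (hg : ∀ᶠ t in 𝓝[≥] t₀, HasDerivWithinAt g (g' t) (Set.Ici t₀) t)
    (hC : 0 ≤ C) (hdefect : ∀ᶠ t in 𝓝[≥] t₀, ‖g' t - v t (g t)‖ ≤ C * ‖(t - t₀) ^ n‖)
    (hfg : f t₀ = g t₀) :
    ∀ᶠ t in 𝓝[≥] t₀, dist (f t) (g t) ≤ (t - t₀) ^ n * gronwallBound 0 K C (t - t₀) := by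
  have hfs : ∀ᶠ t in 𝓝[≥] t₀, f t ∈ s :=
    (hf.self_of_nhdsWithin Set.self_mem_Ici).continuousWithinAt hs
  have hgs : ∀ᶠ t in 𝓝[≥] t₀, g t ∈ s :=
    (hg.self_of_nhdsWithin Set.self_mem_Ici).continuousWithinAt (hfg ▸ hs)
  obtain ⟨u, hu, hsub⟩ := mem_nhdsGE_iff_exists_Ico_subset.1
    (hv.and (hf.and (hg.and (hdefect.and (hfs.and hgs)))))
  simp only [Set.subset_def, Set.mem_ofPred_eq, imp_and, forall_and] at hsub
  obtain ⟨lipschitz, f_deriv, g_deriv, defect_le, f_mem, g_mem⟩ := hsub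
  filter_upwards [Ico_mem_nhdsGE hu] with t ht
  have hIcc : Set.Icc t₀ t ⊆ Set.Ico t₀ u := Set.Icc_subset_Ico_right ht.2
  have hIco : Set.Ico t₀ t ⊆ Set.Ico t₀ u := Set.Ico_subset_Ico_right ht.2.le
  have defect_le_endpoint : ∀ τ ∈ Set.Ico t₀ t,
      dist (g' τ) (v τ (g τ)) ≤ (t - t₀) ^ n * C := by
    intro τ hτ
    have hτ₀ : 0 ≤ τ - t₀ := sub_nonneg.2 hτ.1
    calc dist (g' τ) (v τ (g τ)) ≤ C * ‖(τ - t₀) ^ n‖ := by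
          simpa only [dist_eq_norm] using defect_le τ (hIco hτ)
      _ = (τ - t₀) ^ n * C := by rw [Real.norm_of_nonneg (pow_nonneg hτ₀ n), mul_comm]
      _ ≤ (t - t₀) ^ n * C := by gcongr; exact hτ.2.le
  calc dist (f t) (g t) ≤ gronwallBound 0 K (0 + (t - t₀) ^ n * C) (t - t₀) :=
        dist_le_of_approx_trajectories_ODE_of_mem (s := fun _ ↦ s)
          (fun τ hτ ↦ lipschitz τ (hIco hτ))
          (fun τ hτ ↦ (f_deriv τ (hIcc hτ)).continuousWithinAt.mono Set.Icc_subset_Ici_self)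
          (fun τ hτ ↦ (f_deriv τ (hIco hτ)).mono (Set.Ici_subset_Ici.2 hτ.1))
          (fun τ _ ↦ (dist_self _).le)
          (fun τ hτ ↦ f_mem τ (hIco hτ))
          (fun τ hτ ↦ (g_deriv τ (hIcc hτ)).continuousWithinAt.mono Set.Icc_subset_Ici_self)
          (fun τ hτ ↦ (g_deriv τ (hIco hτ)).mono (Set.Ici_subset_Ici.2 hτ.1))
          defect_le_endpoint
          (fun τ hτ ↦ g_mem τ (hIco hτ))
          (dist_le_zero.2 hfg) t ⟨ht.1, le_rfl⟩
    _ = (t - t₀) ^ n * gronwallBound 0 K C (t - t₀) := by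
        rw [zero_add, ← gronwallBound_const_mul, mul_zero]

theorem isBigO_sub_of_isBigO_defect
    (hv : ∀ᶠ t in 𝓝[≥] t₀, LipschitzOnWith K (v t) s) (hs : s ∈ 𝓝 (f t₀))
    (hf : ∀ᶠ t in 𝓝[≥] t₀, HasDerivWithinAt f (v t (f t)) (Set.Ici t₀) t)
    (hg : ∀ᶠ t in 𝓝[≥] t₀, HasDerivWithinAt g (g' t) (Set.Ici t₀) t)
    (hdefect : (fun t ↦ g' t - v t (g t)) =O[𝓝[≥] t₀] fun t ↦ (t - t₀) ^ n)
    (hfg : f t₀ = g t₀) :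
    (fun t ↦ f t - g t) =O[𝓝[≥] t₀] fun t ↦ (t - t₀) ^ (n + 1) := by
  obtain ⟨C, hC, hdefect_le⟩ := hdefect.exists_nonneg
  have dist_le := eventually_dist_le_pow_mul_gronwallBound_of_defect_le hv hs hf hg hC
    hdefect_le.bound hfg
  calc (fun t ↦ f t - g t)
      =O[𝓝[≥] t₀] fun t ↦ (t - t₀) ^ n * gronwallBound 0 K C (t - t₀) :=
        .of_norm_eventuallyLE <| dist_le.mono fun t ht ↦ by simpa only [dist_eq_norm] using ht
    _ =O[𝓝[≥] t₀] fun t ↦ (t - t₀) ^ (n + 1) := by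
        simpa only [pow_succ] using (isBigO_refl _ _).mul
          ((isBigO_gronwallBound_zero_sub K C t₀).mono nhdsWithin_le_nhds)

end LocalError

section QuadraticTaylor

/-- The right-hand side `ax² + bx + c` of the Riccati equation with constant coefficients. -/
def riccatiField (a b c x : ℝ) : ℝ := a * x ^ 2 + b * x + c

/-- The solution `2ch/(2 - bh)` of the Riccati equation with `x(0) = 0` in the case of vanishing
discriminant; `a` does not occur, since then `c ≠ 0` forces `a = b²/(4c)`. -/
noncomputable def doubleRootSolution (b c h : ℝ) : ℝ := 2 * c * h / (2 - b * h)

/-- The term `h³cΔ/(3(2 - bh)²)` by which the third-case formula corrects `doubleRootSolution`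
when the discriminant `Δ` is nonzero. -/
noncomputable def discrimCorrection (a b c h : ℝ) : ℝ :=
  h ^ 3 * c * discrim a b c / (3 * (2 - b * h) ^ 2)

/-- The increment `Φ(h, y) - y` of the third-case formula. -/
noncomputable def thirdCaseIncrement (a b c h : ℝ) : ℝ :=
  doubleRootSolution b c h - discrimCorrection a b c h

/-- The factor `m` in the defect `h³ m(h)` of `thirdCaseIncrement`. -/
noncomputable def thirdCaseDefectFactor (a b c h : ℝ) : ℝ :=
  c * discrim a b c / (3 * (2 - b * h) ^ 2) *
    (a * (2 * doubleRootSolution b c h - discrimCorrection a b c h) + b - 2 * b / (2 - b * h))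

variable {a b c h : ℝ}

theorem hasDerivAt_two_sub_mul (b h : ℝ) : HasDerivAt (fun h ↦ 2 - b * h) (-b) h := by
  simpa using ((hasDerivAt_id h).const_mul b).const_sub 2

theorem hasDerivAt_doubleRootSolution (a c : ℝ) (hh : 2 - b * h ≠ 0) :
    HasDerivAt (doubleRootSolution b c)
      (riccatiField a b c (doubleRootSolution b c h) +
        h ^ 2 * c * discrim a b c / (2 - b * h) ^ 2) h := by
  refine (((hasDerivAt_id h).const_mul (2 * c)).div (hasDerivAt_two_sub_mul b h) hh).congr_deriv ?_
  simp only [riccatiField, doubleRootSolution, discrim, id]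
  field_simp
  ring

theorem hasDerivAt_discrimCorrection (a c : ℝ) (hh : 2 - b * h ≠ 0) :
    HasDerivAt (discrimCorrection a b c)
      (h ^ 2 * c * discrim a b c / (2 - b * h) ^ 2 +
        discrimCorrection a b c h * (2 * b / (2 - b * h))) h := by
  refine ((((hasDerivAt_pow 3 h).mul_const c).mul_const (discrim a b c)).div
    (((hasDerivAt_two_sub_mul b h).pow 2).const_mul 3) (by simpa using hh)).congr_deriv ?_
  simp only [discrimCorrection, Pi.pow_apply]
  field_simp
  ring

theorem hasDerivAt_thirdCaseIncrement (a c : ℝ) (hh : 2 - b * h ≠ 0) :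
    HasDerivAt (thirdCaseIncrement a b c)
      (riccatiField a b c (thirdCaseIncrement a b c h) + thirdCaseDefectFactor a b c h * h ^ 3)
      h := by
  refine ((hasDerivAt_doubleRootSolution a c hh).sub
    (hasDerivAt_discrimCorrection a c hh)).congr_deriv ?_
  have correction_eq : discrimCorrection a b c h =
      c * discrim a b c / (3 * (2 - b * h) ^ 2) * h ^ 3 := by
    rw [discrimCorrection]; ring
  simp only [riccatiField, thirdCaseIncrement, thirdCaseDefectFactor]
  linear_combination (a * (2 * doubleRootSolution b c h - discrimCorrection a b c h) + b -
    2 * b / (2 - b * h)) * correction_eq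

theorem continuousAt_thirdCaseDefectFactor_zero (a b c : ℝ) :
    ContinuousAt (thirdCaseDefectFactor a b c) 0 := by
  unfold thirdCaseDefectFactor doubleRootSolution discrimCorrection
  fun_prop (disch := norm_num)

theorem exists_lipschitzOnWith_riccatiField (a b c x : ℝ) :
    ∃ K, ∃ s ∈ 𝓝 x, LipschitzOnWith K (riccatiField a b c) s :=
  ContDiffAt.exists_lipschitzOnWith (𝕂 := ℝ) (by unfold riccatiField; fun_prop)

end QuadraticTaylor

/-- The third-case formula `Φ(h,y) = y + 2ch/(2 − bh) − h³cΔ/(3(2 − bh)²)` of the quadratic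
Taylor method agrees with the exact solution of the quadratic-coefficient IVP
`ẇ = aw² + bw + c`, `w(0) = 0` to third order in the step size: the difference is `O(h⁴)`
as `h → 0⁺`. -/
theorem third_case_formula_O4
    (a b c : ℝ) (ε : ℝ) (hε : 0 < ε) (w : ℝ → ℝ)
    (hw0 : w 0 = 0)
    (hw : ∀ t ∈ Set.Ico (0 : ℝ) ε,
      HasDerivWithinAt w (a * w t ^ 2 + b * w t + c) (Set.Ico (0 : ℝ) ε) t) :
    (fun h : ℝ => w h -
        (2 * c * h / (2 - b * h) -
          h ^ 3 * c * (b ^ 2 - 4 * a * c) / (3 * (2 - b * h) ^ 2)))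
      =O[𝓝[>] 0] fun h : ℝ => h ^ 4 := by
  obtain ⟨K, s, hs, lipschitz⟩ := exists_lipschitzOnWith_riccatiField a b c (w 0)
  have exact_deriv : ∀ᶠ t in 𝓝[≥] (0 : ℝ),
      HasDerivWithinAt w (riccatiField a b c (w t)) (Set.Ici 0) t := by
    filter_upwards [Ico_mem_nhdsGE hε] with t ht
    refine (hw t ht).mono_of_mem_nhdsWithin ?_
    exact inter_mem_nhdsWithin _ (Iio_mem_nhds ht.2)
  have denom_ne_zero : ∀ᶠ t in 𝓝[≥] (0 : ℝ), 2 - b * t ≠ 0 :=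
    ((hasDerivAt_two_sub_mul b 0).continuousAt.eventually_ne (by simp)).filter_mono
      nhdsWithin_le_nhds
  have formula_deriv := denom_ne_zero.mono fun t ht ↦
    (hasDerivAt_thirdCaseIncrement a c ht).hasDerivWithinAt (s := Set.Ici 0)
  have factor_bounded : thirdCaseDefectFactor a b c =O[𝓝[≥] 0] fun _ ↦ (1 : ℝ) :=
    (continuousAt_thirdCaseDefectFactor_zero a b c).continuousWithinAt.isBigO_one ℝ
  have error := isBigO_sub_of_isBigO_defect (n := 3) (.of_forall fun _ ↦ lipschitz) hs exact_deriv
    formula_deriv (by simpa using factor_bounded.mul (isBigO_refl (fun t : ℝ ↦ t ^ 3) _))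
    (by simp [hw0, thirdCaseIncrement, doubleRootSolution, discrimCorrection])
  simpa only [sub_zero, thirdCaseIncrement, doubleRootSolution, discrimCorrection, discrim] using
    error.mono (nhdsWithin_mono 0 Set.Ioi_subset_Ici_self)
end
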